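/- arXiv:2404.17678 — 3 statements merged into one kernel-verified Lean document; each statement's English description precedes it below -/
import Mathlib

section
/- Let q be a prime power with q ≡ 1 (mod 4), let χ_4 be a multiplicative character of F_q^* of order 4, and let C be a multiplicative character of F_q^* with C^4 ≠ ε. Then _3F_3(φ, φC, φC̄; ε, C̄, C | −1)_q = C(−1) · (1 + E), where E = 0 if χ_4 C is not the square of any multiplicative character of F_q^*, and otherwise E = Σ_{D: D^2 = χ_4 C} g(D) g(χ_4 D) / ( g(φD) g(χ̄_4 D) ), the sum being over multiplicative characters D with D^2 = χ_4 C. -/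
/-- The finite field hypergeometric function `ₘFₘ` of McCarthy, with upper parameters `A`,
lower parameters `B` (indexed by a finite type `ι`), and argument `lam`. -/
noncomputable def ffHyp {F : Type} [Field F] [Fintype F] (θ : AddChar F ℂ)
    {ι : Type} [Fintype ι] (A B : ι → MulChar F ℂ) (lam : F) : ℂ :=
  letI : Fintype (MulChar F ℂ) := Fintype.ofFinite _
  (-1 : ℂ) / ((Fintype.card F : ℂ) - 1) *
    ∑ χ : MulChar F ℂ,
      (∏ i, (gaussSum (A i * χ) θ / gaussSum (A i) θ) *
        (gaussSum ((B i * χ)⁻¹) θ / gaussSum ((B i)⁻¹) θ)) *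
      χ (-1) ^ (Fintype.card ι) * χ lam

/-!
Written with Jacobi sums, both sides are sums over characters of products of Mellin transforms of
`u ↦ φ (1 + u)`, and orthogonality of characters removes the sum over characters. On the
hypergeometric side this leaves a sum over `t` and `w` in which `w` enters only through
`z = t * w + w⁻¹`; the substitution `z = 2 * (1 + t) / m` yields the sum of
`φ (m + 2) * φ ((1 + t) ^ 2 - t * m ^ 2)`. On the other side it leaves a sum over `u` and `v` in
which `v` enters only through `η v` and `v + v⁻¹`, where `η` is the quartic character; since
`η (s ^ 2) = φ s` and `s ^ 2 + s⁻² = m ^ 2 - 2` for `m = s + s⁻¹`, the same sum appears for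
`u = -t`. The constants agree because `φ 2 = η (-1)`.
-/

lemma mul_ne_one_of_pow_eq_one {G : Type*} [CommMonoid G] {a b : G} {n : ℕ} (ha : a ^ n = 1)
    (hb : b ^ n ≠ 1) : a * b ≠ 1 := by
  contrapose! hb
  rw [← one_mul (b ^ n), ← ha, ← mul_pow, hb, one_pow, ha]

lemma ite_exists_sum_filter {ι N : Type*} [Fintype ι] [AddCommMonoid N] (p : ι → Prop)
    [DecidablePred p] [Decidable (∃ i, p i)] (f : ι → N) :
    (if ∃ i, p i then ∑ i with p i, f i else 0) = ∑ i with p i, f i :=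
  ite_eq_left_iff.mpr fun h ↦ by
    rw [Finset.filter_false_of_mem fun i _ hi ↦ h ⟨i, hi⟩, Finset.sum_empty]

lemma sum_eq_add_sum_units {G₀ N : Type*} [GroupWithZero G₀] [Fintype G₀] [Fintype G₀ˣ]
    [AddCommMonoid N] (f : G₀ → N) : ∑ x, f x = f 0 + ∑ u : G₀ˣ, f u := by
  classical
  rw [Fintype.sum_eq_add_sum_subtype_ne f 0]
  congr 1
  exact (Fintype.sum_equiv unitsEquivNeZero _ _ fun _ ↦ rfl).symm

section Mellin

variable {M R : Type*} [CommMonoid M] [CommRing R]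

lemma mulChar_inv_apply_coe (χ : MulChar M R) (u : Mˣ) : χ⁻¹ u = χ (u⁻¹ : Mˣ) := by
  rw [← mul_one (χ⁻¹ u), ← map_one χ, ← Units.val_one, ← mul_inv_cancel u, Units.val_mul, map_mul,
    ← mul_assoc, ← MulChar.mul_apply, inv_mul_cancel, MulChar.one_apply_coe, one_mul]

variable [Fintype Mˣ]

/-- The Mellin transform of a function on the unit group: its pairing with the multiplicative
character `χ`. -/
def mellinSum (f : Mˣ → R) (χ : MulChar M R) : R :=
  ∑ u : Mˣ, χ u * f u

lemma mellinSum_mul_left (f : Mˣ → R) (ψ χ : MulChar M R) :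
    mellinSum f (ψ * χ) = mellinSum (fun u ↦ ψ u * f u) χ :=
  Finset.sum_congr rfl fun u _ ↦ by rw [MulChar.mul_apply]; ring

lemma mellinSum_mul_mellinSum (f g : Mˣ → R) (χ : MulChar M R) :
    mellinSum f χ * mellinSum g χ = mellinSum (fun u ↦ ∑ v, f (u * v⁻¹) * g v) χ := by
  simp only [mellinSum, Finset.sum_mul_sum]
  simp only [Finset.mul_sum]
  rw [Finset.sum_comm]
  conv_rhs => rw [Finset.sum_comm]
  refine Finset.sum_congr rfl fun v _ ↦ Fintype.sum_equiv (Equiv.mulRight v) _ _ fun u ↦ ?_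
  rw [Equiv.coe_mulRight, mul_inv_cancel_right, Units.val_mul, map_mul]
  ring

variable [IsDomain R]

lemma sum_units_mulChar (χ : MulChar M R) [Decidable (χ = 1)] :
    ∑ u : Mˣ, χ u = if χ = 1 then (Fintype.card Mˣ : R) else 0 := by
  split_ifs with h
  · simp [h]
  · obtain ⟨a, ha⟩ := MulChar.ne_one_iff.mp h
    refine eq_zero_of_mul_eq_self_left ha ?_
    rw [Finset.mul_sum]
    exact Fintype.sum_equiv (Equiv.mulLeft a) _ _ fun u ↦ by simp

variable [Finite M] [HasEnoughRootsOfUnity R (Monoid.exponent Mˣ)] [Fintype (MulChar M R)]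

lemma sum_mulChar_apply (a : M) [Decidable (a = 1)] :
    ∑ χ : MulChar M R, χ a = if a = 1 then (Fintype.card Mˣ : R) else 0 := by
  split_ifs with ha
  · simp [ha, ← Nat.card_eq_fintype_card, MulChar.card_eq_card_units_of_hasEnoughRootsOfUnity]
  · obtain ⟨χ, hχ⟩ := MulChar.exists_apply_ne_one_of_hasEnoughRootsOfUnity M R ha
    refine eq_zero_of_mul_eq_self_left hχ ?_
    rw [Finset.mul_sum]
    exact Fintype.sum_equiv (Equiv.mulLeft χ) _ _ fun χ' ↦ by simp

lemma sum_mellinSum (f : Mˣ → R) :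
    ∑ χ : MulChar M R, mellinSum f χ = Fintype.card Mˣ * f 1 := by
  classical
  simp only [mellinSum]
  rw [Finset.sum_comm]
  simp only [← Finset.sum_mul, sum_mulChar_apply, Units.val_eq_one, ite_mul, zero_mul,
    Finset.sum_ite_eq', Finset.mem_univ, if_true]

lemma sum_mellinSum_mul_mellinSum_mul_mellinSum (f g h : Mˣ → R) (ψ : MulChar M R) :
    ∑ χ, mellinSum f χ * mellinSum g (ψ * χ) * mellinSum h (ψ⁻¹ * χ) =
      Fintype.card Mˣ * ∑ t : Mˣ, ψ t * ∑ w : Mˣ, f (t * w * w)⁻¹ * g (t * w) * h w := by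
  simp only [mellinSum_mul_left, mellinSum_mul_mellinSum, sum_mellinSum, one_mul]
  congr 1
  simp only [Finset.mul_sum, Finset.sum_mul]
  conv_rhs => rw [Finset.sum_comm]
  refine Finset.sum_congr rfl fun w _ ↦ Fintype.sum_equiv (Equiv.mulRight w⁻¹) _ _ fun u ↦ ?_
  rw [Equiv.coe_mulRight, inv_mul_cancel_right, mul_inv_rev u w, Units.val_mul, map_mul,
    mulChar_inv_apply_coe]
  ring

variable [CharZero R] [DecidableEq (MulChar M R)]

lemma sum_mulChar_apply_of_pow_eq [DecidableEq M] (n : ℕ) (ψ : MulChar M R) (u : Mˣ) :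
    ∑ χ with χ ^ n = ψ, χ u = ∑ v : Mˣ with v ^ n = u, ψ v := by
  have hcard : (Fintype.card Mˣ : R) ≠ 0 := Nat.cast_ne_zero.mpr Fintype.card_ne_zero
  have hinv (χ : MulChar M R) (v : Mˣ) :
      χ u * (ψ * (χ ^ n)⁻¹) v = ψ v * χ (u * (v ^ n)⁻¹ : Mˣ) := by
    rw [MulChar.mul_apply, mulChar_inv_apply_coe, MulChar.pow_apply_coe, Units.val_mul, map_mul,
      ← inv_pow, Units.val_pow_eq_pow_val, map_pow]
    ring
  refine mul_right_cancel₀ hcard ?_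
  calc (∑ χ with χ ^ n = ψ, χ u) * (Fintype.card Mˣ : R)
      = ∑ χ : MulChar M R, χ u * ∑ v : Mˣ, (ψ * (χ ^ n)⁻¹) v := by
        simp only [sum_units_mulChar, mul_inv_eq_one, Finset.sum_filter, Finset.sum_mul, mul_ite,
          mul_zero, ite_mul, zero_mul, eq_comm (a := ψ)]
    _ = ∑ v : Mˣ, ψ v * ∑ χ : MulChar M R, χ (u * (v ^ n)⁻¹ : Mˣ) := by
        simp only [Finset.mul_sum, hinv]
        exact Finset.sum_comm
    _ = (∑ v : Mˣ with v ^ n = u, ψ v) * (Fintype.card Mˣ : R) := by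
        simp only [sum_mulChar_apply, Units.val_eq_one, mul_inv_eq_one, Finset.sum_filter,
          Finset.sum_mul, mul_ite, mul_zero, ite_mul, zero_mul, eq_comm (a := u)]

lemma sum_mellinSum_of_pow_eq (n : ℕ) (ψ : MulChar M R) (f : Mˣ → R) :
    ∑ χ with χ ^ n = ψ, mellinSum f χ = ∑ u : Mˣ, ψ u * f (u ^ n) := by
  classical
  simp only [mellinSum]
  rw [Finset.sum_comm]
  simp only [← Finset.sum_mul, sum_mulChar_apply_of_pow_eq]
  simp only [Finset.sum_filter, Finset.sum_mul, ite_mul, zero_mul]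
  rw [Finset.sum_comm]
  simp

lemma sum_mellinSum_mul_mellinSum_of_sq_eq (f g : Mˣ → R) (ψ : MulChar M R) :
    ∑ χ with χ ^ 2 = ψ, mellinSum f χ * mellinSum g χ =
      ∑ u : Mˣ, ψ u * ∑ v : Mˣ, f (u * v⁻¹) * g (u * v) := by
  simp only [mellinSum_mul_mellinSum, sum_mellinSum_of_pow_eq]
  refine Finset.sum_congr rfl fun u _ ↦ congrArg _ <|
    Fintype.sum_equiv (Equiv.mulLeft u⁻¹) _ _ fun v ↦ ?_
  simp only [Equiv.coe_mulLeft]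
  rw [show u ^ 2 * v⁻¹ = u * (u⁻¹ * v)⁻¹ by rw [mul_inv, inv_inv, sq, mul_assoc],
    mul_inv_cancel_left]

end Mellin

section NegOne

variable {A R : Type*} [CommRing A] [CommRing R]

lemma mulChar_neg_one_mul_self (χ : MulChar A R) : χ (-1) * χ (-1) = 1 := by
  rw [← map_mul, neg_one_mul, neg_neg, map_one]

lemma mulChar_apply_neg_one_of_sq_eq {φ χ : MulChar A R} (hχ : χ ^ 2 = φ) : φ (-1) = 1 := by
  rw [← hχ, MulChar.pow_apply' _ two_ne_zero, sq, mulChar_neg_one_mul_self]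

end NegOne

section JacobiSum

variable {F R : Type*} [Field F] [Fintype F] [CommRing R]

lemma sum_mulChar_apply_add [IsDomain R] {χ : MulChar F R} (hχ : χ ≠ 1) (c : F) :
    ∑ x, χ (x + c) = 0 :=
  (Fintype.sum_equiv (Equiv.addRight c) _ χ fun _ ↦ rfl).trans (MulChar.sum_eq_zero_of_ne_one hχ)

lemma mellinSum_coe_units [Fintype Fˣ] (f : F → R) (χ : MulChar F R) :
    mellinSum (fun u : Fˣ ↦ f u) χ = ∑ x, χ x * f x := by
  rw [sum_eq_add_sum_units, MulChar.map_zero, zero_mul, zero_add, mellinSum]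

lemma jacobiSum_mul_inv_eq_mellinSum [Fintype Fˣ] (α χ : MulChar F R) :
    jacobiSum χ (α * χ)⁻¹ = mellinSum (fun u : Fˣ ↦ α (1 + u)) χ := by
  rw [mellinSum_coe_units (fun x ↦ α (1 + x)), jacobiSum]
  refine (Fintype.sum_equiv (((Equiv.addLeft 1).trans (Equiv.inv F)).trans (Equiv.subLeft 1))
    _ _ fun x ↦ ?_).symm
  simp only [Equiv.trans_apply, Equiv.coe_addLeft, Equiv.inv_apply, Equiv.subLeft_apply,
    sub_sub_cancel, MulChar.inv_apply', inv_inv, MulChar.mul_apply]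
  by_cases hx : 1 + x = 0
  · simp [hx, MulChar.map_zero]
  · rw [mul_left_comm, ← map_mul, one_sub_mul, inv_mul_cancel₀ hx, add_sub_cancel_left, mul_comm]

end JacobiSum

section GaussSum

variable {F : Type*} [Field F] [Fintype F]

lemma gaussSum_mul_gaussSum_inv {R : Type*} [CommRing R] [IsDomain R] {θ : AddChar F R}
    (hθ : θ.IsPrimitive) {χ : MulChar F R} (hχ : χ ≠ 1) :
    gaussSum χ θ * gaussSum χ⁻¹ θ = χ (-1) * Fintype.card F := by
  rw [← gaussSum_mul_gaussSum_eq_card hχ hθ, ← mul_gaussSum_inv_eq_gaussSum χ⁻¹ θ,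
    MulChar.inv_apply', inv_neg_one]
  ring

variable {K : Type*} [Field K] {θ : AddChar F K}

lemma gaussSum_div_gaussSum_mul (hθ : θ.IsPrimitive) (hF : (Fintype.card F : K) ≠ 0)
    {α χ : MulChar F K} (hα : α ≠ 1) (hαχ : α * χ ≠ 1) :
    gaussSum χ θ / gaussSum (α * χ) θ =
      (α * χ) (-1) * gaussSum α⁻¹ θ * jacobiSum χ (α * χ)⁻¹ / Fintype.card F := by
  have hχα : χ * (α * χ)⁻¹ = α⁻¹ := by group
  have hJ := jacobiSum_mul_nontrivial (by rwa [hχα, inv_ne_one]) θ (χ := χ) (φ := (α * χ)⁻¹)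
  rw [hχα] at hJ
  rw [mul_assoc, hJ, div_eq_div_iff (gaussSum_ne_zero_of_nontrivial hF hαχ hθ) hF]
  linear_combination -(α * χ) (-1) * gaussSum χ θ * gaussSum_mul_gaussSum_inv hθ hαχ -
    gaussSum χ θ * Fintype.card F * mulChar_neg_one_mul_self (α * χ)

lemma gaussSum_mul_gaussSum_div_gaussSum_mul_gaussSum (hθ : θ.IsPrimitive)
    (hF : (Fintype.card F : K) ≠ 0) {η χ : MulChar F K} (hη : η ^ 4 = 1) (hη₂ : η ^ 2 ≠ 1)
    (hχ : η ^ 2 * χ ≠ 1) (hχ' : η⁻¹ * χ ≠ 1) :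
    gaussSum χ θ * gaussSum (η * χ) θ / (gaussSum (η ^ 2 * χ) θ * gaussSum (η⁻¹ * χ) θ) =
      η (-1) * (jacobiSum χ (η ^ 2 * χ)⁻¹ * jacobiSum (η * χ) (η ^ 2 * (η * χ))⁻¹) /
        Fintype.card F := by
  have hη_inv : η⁻¹ * χ = η ^ 2 * (η * χ) := by
    rw [← mul_assoc, ← pow_succ, inv_eq_of_mul_eq_one_right (b := η ^ 3) (by rw [← pow_succ', hη])]
  have hη₂_inv : (η ^ 2)⁻¹ = η ^ 2 := inv_eq_of_mul_eq_one_right (by rw [← pow_add, hη])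
  have hgauss := gaussSum_mul_gaussSum_inv hθ hη₂
  rw [hη₂_inv, MulChar.pow_apply' _ two_ne_zero, sq (η (-1)), mulChar_neg_one_mul_self,
    one_mul] at hgauss
  rw [hη_inv] at hχ' ⊢
  rw [mul_div_mul_comm, gaussSum_div_gaussSum_mul hθ hF hη₂ hχ,
    gaussSum_div_gaussSum_mul hθ hF hη₂ hχ', hη₂_inv]
  simp only [MulChar.mul_apply, MulChar.pow_apply' _ two_ne_zero]
  have hneg : (η (-1) ^ 2 * χ (-1)) * (η (-1) ^ 2 * (η (-1) * χ (-1))) = η (-1) := by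
    linear_combination η (-1) *
      ((η (-1) * η (-1) + 1) * χ (-1) ^ 2 * mulChar_neg_one_mul_self η +
        mulChar_neg_one_mul_self χ)
  field_simp
  linear_combination (jacobiSum χ (η ^ 2 * χ)⁻¹ * jacobiSum (η * χ) (η ^ 2 * (η * χ))⁻¹) *
    (gaussSum (η ^ 2) θ ^ 2 * hneg + η (-1) * hgauss)

end GaussSum

section Hypergeometric

variable {F : Type} [Field F] [Fintype F] {θ : AddChar F ℂ}

lemma ffHyp_comp_perm {ι : Type} [Fintype ι] (A B : ι → MulChar F ℂ) (σ : Equiv.Perm ι) (lam : F) :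
    ffHyp θ A (B ∘ σ) lam = ffHyp θ A B lam := by
  simp only [ffHyp, Finset.prod_mul_distrib, Function.comp_apply]
  refine congrArg _ (Finset.sum_congr rfl fun χ _ ↦ ?_)
  rw [Equiv.prod_comp σ fun i ↦ gaussSum (B i * χ)⁻¹ θ / gaussSum (B i)⁻¹ θ]

lemma gaussSum_div_mul_gaussSum_div_eq_jacobiSum_div (hθ : θ.IsPrimitive) {A B : MulChar F ℂ}
    (hAB : A ≠ B) (χ : MulChar F ℂ) :
    gaussSum (A * χ) θ / gaussSum A θ * (gaussSum (B * χ)⁻¹ θ / gaussSum B⁻¹ θ) =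
      jacobiSum (A * χ) (B * χ)⁻¹ / jacobiSum A B⁻¹ := by
  have hAB' : A * B⁻¹ ≠ 1 := mul_inv_eq_one.not.mpr hAB
  have hχ : A * χ * (B * χ)⁻¹ = A * B⁻¹ := by
    rw [← div_eq_mul_inv, mul_div_mul_right_eq_div, div_eq_mul_inv]
  rw [div_mul_div_comm, ← jacobiSum_mul_nontrivial (by rwa [hχ]), ← jacobiSum_mul_nontrivial hAB',
    hχ, mul_div_mul_left]
  exact gaussSum_ne_zero_of_nontrivial (Nat.cast_ne_zero.mpr Fintype.card_ne_zero) hAB' hθ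

variable [Fintype (MulChar F ℂ)]

lemma ffHyp_eq_sum_jacobiSum (hθ : θ.IsPrimitive) {ι : Type} [Fintype ι] {A B : ι → MulChar F ℂ}
    (hAB : ∀ i, A i ≠ B i) (lam : F) :
    ffHyp θ A B lam = -1 / ((Fintype.card F : ℂ) - 1) * ∑ χ : MulChar F ℂ,
      (∏ i, jacobiSum (A i * χ) (B i * χ)⁻¹ / jacobiSum (A i) (B i)⁻¹) *
        χ (-1) ^ Fintype.card ι * χ lam := by
  simp only [ffHyp, gaussSum_div_mul_gaussSum_div_eq_jacobiSum_div hθ (hAB _)]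
  congr!

lemma ffHyp_quadratic_twists_neg_one (hθ : θ.IsPrimitive) {φ C : MulChar F ℂ} (hφ : φ ^ 2 = 1)
    (hφ₁ : φ ≠ 1) (hC : C ≠ 1) (hφC : φ * C ≠ 1) :
    ffHyp θ ![φ, φ * C, φ * C⁻¹] ![1, C⁻¹, C] (-1) =
      ((Fintype.card F : ℂ) * (Fintype.card F - 1))⁻¹ * ∑ χ : MulChar F ℂ,
        jacobiSum χ (φ * χ)⁻¹ * jacobiSum (C * χ) (φ * (C * χ))⁻¹ *
          jacobiSum (C⁻¹ * χ) (φ * (C⁻¹ * χ))⁻¹ := by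
  have hφφ (χ : MulChar F ℂ) : φ * (φ * χ) = χ := by rw [← mul_assoc, ← sq, hφ, one_mul]
  have hperm : ![1, C⁻¹, C] = ![1, C, C⁻¹] ∘ Equiv.swap 1 2 := by
    ext i
    fin_cases i <;> rfl
  have hAB : ∀ i, ![φ, φ * C, φ * C⁻¹] i ≠ ![1, C, C⁻¹] i := by
    simp [Fin.forall_fin_succ, hφ₁]
  have hJ : jacobiSum (φ * C) C⁻¹ * jacobiSum (φ * C⁻¹) C⁻¹⁻¹ = Fintype.card F := by
    have hchar : ringChar ℂ ≠ ringChar F := by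
      rw [ringChar.eq_zero]
      exact (CharP.ringChar_ne_zero_of_finite F).symm
    have hinv : (φ * C)⁻¹ = φ * C⁻¹ := by
      rw [mul_inv, inv_eq_of_mul_eq_one_right (sq φ ▸ hφ)]
    rw [← hinv]
    exact jacobiSum_mul_jacobiSum_inv hchar hφC (inv_ne_one.mpr hC) (by simpa using hφ₁)
  have hJ₁ : jacobiSum φ 1⁻¹ = -1 := by
    rw [inv_one, jacobiSum_comm, jacobiSum_one_nontrivial hφ₁]
  rw [hperm, ffHyp_comp_perm, ffHyp_eq_sum_jacobiSum hθ hAB, Finset.mul_sum, Finset.mul_sum]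
  refine Fintype.sum_equiv (Equiv.mulLeft φ) _ _ fun χ ↦ ?_
  have hsign : χ (-1) ^ 3 * χ (-1) = 1 := by
    rw [← pow_succ, pow_mul _ 2 2, sq (χ (-1)), mulChar_neg_one_mul_self, one_pow]
  have hφCχ (C : MulChar F ℂ) : φ * C * χ = C * (φ * χ) := by rw [mul_right_comm, mul_comm]
  have hCχ (C : MulChar F ℂ) : φ * (C * (φ * χ)) = C * χ := by rw [mul_left_comm C, hφφ]
  simp only [Equiv.coe_mulLeft, Fin.prod_univ_three, Fintype.card_fin, mul_assoc _ (_ ^ 3), hsign,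
    mul_one, Matrix.cons_val, hφCχ, hCχ, hφφ, one_mul, hJ₁]
  rw [div_mul_div_comm, div_mul_div_comm, mul_assoc (-1 : ℂ), hJ, neg_one_mul, div_mul_div_comm,
    mul_neg, neg_one_mul, neg_div_neg_eq, div_eq_inv_mul, mul_comm (Fintype.card F : ℂ)]

end Hypergeometric

section QuadraticCharacter

section MulChar

variable {M R : Type*} [CommMonoid M] [CommRing R]

lemma mulChar_apply_mul_self {φ : MulChar M R} (hφ : φ ^ 2 = 1) {c : M} (hc : IsUnit c) :
    φ c * φ c = 1 := by
  rw [← sq, ← MulChar.pow_apply' _ two_ne_zero, hφ, MulChar.one_apply hc]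

lemma mulChar_apply_mul_sq {φ : MulChar M R} (hφ : φ ^ 2 = 1) (b : M) {c : M} (hc : IsUnit c) :
    φ (b * c ^ 2) = φ b := by
  rw [map_mul, map_pow, sq, mulChar_apply_mul_self hφ hc, mul_one]

lemma mulChar_apply_generator_eq_neg_one [IsDomain R] {φ : MulChar M R} (hφ : orderOf φ = 2)
    {g : Mˣ} (hg : ∀ u, u ∈ Subgroup.zpowers g) : φ g = -1 := by
  obtain ⟨hφ_sq, hφ_ne⟩ := orderOf_eq_prime_iff.mp hφ
  have hsq : φ g * φ g = 1 := mulChar_apply_mul_self hφ_sq g.isUnit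
  refine (mul_self_eq_one_iff.mp hsq).resolve_left fun h ↦ hφ_ne ?_
  rw [MulChar.eq_iff hg, h, MulChar.one_apply_coe]

end MulChar

variable {F R : Type*} [Field F] [CommRing R]

lemma sum_apply_mul_sq [Fintype F] {φ : MulChar F R} (hφ : φ ^ 2 = 1) (b : F → F) :
    ∑ z, φ (b z * z ^ 2) = ∑ z, φ (b z) - φ (b 0) := by
  classical
  simp only [sum_eq_add_sum_units fun z ↦ φ (b z * z ^ 2), sum_eq_add_sum_units fun z ↦ φ (b z),
    mulChar_apply_mul_sq hφ _ (Units.isUnit _), zero_pow two_ne_zero, mul_zero, MulChar.map_zero,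
    zero_add, add_sub_cancel_left]

lemma ringChar_ne_two_of_orderOf_eq_two [Finite F] {φ : MulChar F R} (hφ : orderOf φ = 2) :
    ringChar F ≠ 2 := by
  have := Fintype.ofFinite F
  have hdvd : 2 ∣ Fintype.card F - 1 := hφ ▸ MulChar.orderOf_dvd_card_sub_one F φ
  have hcard := Fintype.card_pos (α := F)
  rw [Ne, FiniteField.even_card_iff_char_two]
  lia

variable [Fintype F] [IsDomain R] {φ : MulChar F R} (hφ : orderOf φ = 2)
include hφ

lemma eq_quadraticChar_ringHomComp [DecidableEq F] :
    φ = (quadraticChar F).ringHomComp (Int.castRingHom R) := by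
  obtain ⟨g, hg⟩ := IsCyclic.exists_generator (α := Fˣ)
  have hquad : orderOf (quadraticChar F) = 2 := orderOf_eq_prime_iff.mpr
    ⟨(quadraticChar_isQuadratic F).sq_eq_one,
      quadraticChar_ne_one (ringChar_ne_two_of_orderOf_eq_two hφ)⟩
  rw [MulChar.eq_iff hg, MulChar.ringHomComp_apply, mulChar_apply_generator_eq_neg_one hφ hg,
    mulChar_apply_generator_eq_neg_one hquad hg, map_neg, map_one]

omit [Fintype F] in
lemma eq_of_orderOf_eq_two [Finite F] {ψ : MulChar F R} (hψ : orderOf ψ = 2) : φ = ψ := by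
  classical
  have := Fintype.ofFinite F
  rw [eq_quadraticChar_ringHomComp hφ, eq_quadraticChar_ringHomComp hψ]

lemma card_filter_sq_eq [DecidableEq F] (a : F) :
    (Finset.card {s : F | s ^ 2 = a} : R) = 1 + φ a := by
  rw [eq_quadraticChar_ringHomComp hφ, MulChar.ringHomComp_apply, eq_intCast, add_comm,
    ← Int.cast_one, ← Int.cast_add, ← Int.cast_natCast,
    ← quadraticChar_card_sqrts (ringChar_ne_two_of_orderOf_eq_two hφ)]
  congr!
  ext; simp

lemma card_filter_quadratic_eq_zero [DecidableEq F] {a : F} (ha : a ≠ 0) (b c : F) :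
    (Finset.card {x : F | a * (x * x) + b * x + c = 0} : R) = 1 + φ (discrim a b c) := by
  have h2 : (2 : F) ≠ 0 := Ring.two_ne_zero (ringChar_ne_two_of_orderOf_eq_two hφ)
  have : NeZero (2 : F) := ⟨h2⟩
  rw [← card_filter_sq_eq hφ]
  refine congrArg _ <| Finset.card_equiv
    ((Equiv.mulLeft₀ (2 * a) (mul_ne_zero h2 ha)).trans (Equiv.addRight b)) fun x ↦ ?_
  simp [quadratic_eq_zero_iff_discrim_eq_sq ha, eq_comm]

lemma sum_comp_sq (G : F → R) : ∑ s, G (s ^ 2) = ∑ x, (1 + φ x) * G x := by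
  classical
  simp only [← Finset.sum_fiberwise' Finset.univ (fun s : F ↦ s ^ 2) G, Finset.sum_const,
    nsmul_eq_mul, card_filter_sq_eq hφ]

lemma sum_units_comp_mul_add_inv [Fintype Fˣ] {t : F} (ht : t ≠ 0) (G : F → R) :
    ∑ w : Fˣ, G (t * w + (w : F)⁻¹) = ∑ z, (1 + φ (z ^ 2 - 4 * t)) * G z := by
  classical
  have hiff (z : F) (w : Fˣ) : t * (w * w : F) + -z * w + 1 = 0 ↔ t * w + (w : F)⁻¹ = z := by
    field_simp
    constructor <;> intro h <;> linear_combination h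
  have hcard (z : F) : Finset.card {w : Fˣ | t * w + (w : F)⁻¹ = z} =
      Finset.card {x : F | t * (x * x) + -z * x + 1 = 0} := by
    refine Finset.card_bij (fun w _ ↦ w) (fun w hw ↦ ?_) (fun _ _ _ _ ↦ Units.ext)
      fun x hx ↦ ?_
    · simpa only [Finset.mem_filter_univ, hiff] using hw
    · have hx₀ : x ≠ 0 := by rintro rfl; simp at hx
      refine ⟨Units.mk0 x hx₀, ?_, rfl⟩
      simpa only [Finset.mem_filter_univ, ← hiff, Units.val_mk0] using hx
  have hdiscrim (z : F) : discrim t (-z) 1 = z ^ 2 - 4 * t := by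
    rw [discrim]
    ring
  simp only [← Finset.sum_fiberwise' Finset.univ (fun w : Fˣ ↦ t * w + (w : F)⁻¹) G,
    Finset.sum_const, nsmul_eq_mul, hcard, card_filter_quadratic_eq_zero hφ ht, hdiscrim]

end QuadraticCharacter

section QuadraticCharacterSums

variable {F R : Type*} [Field F] [Fintype F] [CommRing R] {φ : MulChar F R} (hφ : orderOf φ = 2)
include hφ

lemma sum_apply_mul_quadratic_of_ne_zero {a : F} (ha : a ≠ 0) (t : F) :
    ∑ z, φ (z * (z + a) * (z ^ 2 - 4 * t)) =
      φ 2 * ∑ m, φ ((m + 2) * (a ^ 2 - t * m ^ 2)) - 1 := by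
  classical
  have hφ_sq := (orderOf_eq_prime_iff.mp hφ).1
  have h2 : (2 : F) ≠ 0 := Ring.two_ne_zero (ringChar_ne_two_of_orderOf_eq_two hφ)
  have hφ₂ : φ 2 * φ 2 = 1 := mulChar_apply_mul_self hφ_sq h2.isUnit
  have hsubst (m : Fˣ) : φ 2 * φ ((m + 2) * (a ^ 2 - t * m ^ 2)) =
      φ (2 * a / m * (2 * a / m + a) * ((2 * a / m) ^ 2 - 4 * t)) := by
    rw [← map_mul, ← mulChar_apply_mul_sq hφ_sq _
      (div_ne_zero (mul_ne_zero h2 ha) (pow_ne_zero 2 m.ne_zero)).isUnit]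
    congr 1
    field_simp
    ring
  rw [sum_eq_add_sum_units, sum_eq_add_sum_units fun m ↦ φ ((m + 2) * (a ^ 2 - t * m ^ 2)),
    zero_mul, zero_mul, MulChar.map_zero, zero_add, zero_pow two_ne_zero, mul_zero, sub_zero,
    zero_add, mulChar_apply_mul_sq hφ_sq _ ha.isUnit, mul_add, hφ₂, add_sub_cancel_left,
    Finset.mul_sum]
  exact (Fintype.sum_equiv
    ((Equiv.inv Fˣ).trans (Equiv.mulLeft (Units.mk0 (2 * a) (mul_ne_zero h2 ha)))) _ _ fun m ↦ by
      rw [hsubst]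
      simp [div_eq_mul_inv, mul_assoc]).symm

variable [IsDomain R]

lemma sum_units_mul_comp_add_inv [Fintype Fˣ] (G : F → R) :
    ∑ s : Fˣ, φ s * G (s + (s : F)⁻¹) = ∑ m, (φ (m + 2) + φ (m - 2)) * G m := by
  classical
  have hφ_sq := (orderOf_eq_prime_iff.mp hφ).1
  have hleft (s : Fˣ) : φ s * G (s + (s : F)⁻¹) =
      φ (s + (s : F)⁻¹ + 2) * G (s + (s : F)⁻¹) + if s = -1 then φ (-1) * G (-2) else 0 := by
    split_ifs with hs
    · rw [hs, show ((-1 : Fˣ) : F) + ((-1 : Fˣ) : F)⁻¹ = -2 by norm_num, neg_add_cancel,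
        MulChar.map_zero, zero_mul, zero_add, Units.val_neg, Units.val_one]
    · have hs₁ : (s : F) + 1 ≠ 0 := by
        rwa [Ne, add_eq_zero_iff_eq_neg, ← Units.val_one, ← Units.val_neg, Units.val_inj]
      rw [add_zero, show (s : F) + (s : F)⁻¹ + 2 = s * (((s : F) + 1) / s) ^ 2 by field_simp; ring,
        mulChar_apply_mul_sq hφ_sq _ (by simp [hs₁])]
  have hright (m : F) : (1 + φ (m ^ 2 - 4)) * (φ (m + 2) * G m) =
      (φ (m + 2) + φ (m - 2)) * G m - if m = -2 then φ (-1) * G (-2) else 0 := by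
    split_ifs with hm
    · have h2 : (2 : F) ≠ 0 := Ring.two_ne_zero (ringChar_ne_two_of_orderOf_eq_two hφ)
      rw [hm, neg_add_cancel, MulChar.map_zero, show (-2 - 2 : F) = -1 * 2 ^ 2 by norm_num,
        mulChar_apply_mul_sq hφ_sq _ h2.isUnit]
      ring
    · have hm₂ : m + 2 ≠ 0 := by rwa [Ne, add_eq_zero_iff_eq_neg]
      have hφm : φ (m ^ 2 - 4) * φ (m + 2) = φ (m - 2) := by
        rw [← map_mul, show (m ^ 2 - 4) * (m + 2) = (m - 2) * (m + 2) ^ 2 by ring,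
          mulChar_apply_mul_sq hφ_sq _ hm₂.isUnit]
      linear_combination G m * hφm
  have hsum := sum_units_comp_mul_add_inv hφ one_ne_zero (fun z ↦ φ (z + 2) * G z)
  simp only [one_mul, mul_one, hright, Finset.sum_sub_distrib, Finset.sum_ite_eq',
    Finset.mem_univ, if_true] at hsum
  simp only [hleft, Finset.sum_add_distrib, Finset.sum_ite_eq', Finset.mem_univ, if_true, hsum,
    sub_add_cancel]

lemma sum_apply_mul_add [DecidableEq F] (a : F) :
    ∑ z, φ (z * (z + a)) = (if a = 0 then (Fintype.card F : R) else 0) - 1 := by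
  obtain ⟨hφ_sq, hφ_ne⟩ := orderOf_eq_prime_iff.mp hφ
  have hfactor (z : F) : z * (z + a) = (1 + a * z⁻¹) * z ^ 2 := by
    rcases eq_or_ne z 0 with rfl | hz
    · simp
    · field_simp
  have hsum : ∑ z : F, φ (1 + a * z⁻¹) = if a = 0 then (Fintype.card F : R) else 0 := by
    split_ifs with ha
    · simp [ha]
    · rw [← MulChar.sum_eq_zero_of_ne_one hφ_ne]
      exact Fintype.sum_equiv
        (((Equiv.inv F).trans (Equiv.mulLeft₀ a ha)).trans (Equiv.addLeft 1)) _ _ fun z ↦ rfl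
  simp only [hfactor]
  rw [sum_apply_mul_sq hφ_sq, hsum, inv_zero, mul_zero, add_zero, map_one]

lemma sum_apply_sq_add {c : F} (hc : c ≠ 0) : ∑ x, φ (x ^ 2 + c) = -1 := by
  classical
  simp only [sum_comp_sq hφ fun x ↦ φ (x + c), add_mul, one_mul, Finset.sum_add_distrib,
    sum_mulChar_apply_add (orderOf_eq_prime_iff.mp hφ).2, ← map_mul, sum_apply_mul_add hφ,
    if_neg hc]
  ring

section SquareRoot

variable [NeZero (2 : R)] {χ : MulChar F R} (hχ : χ ^ 2 = φ)
include hχ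

omit [Fintype F] in
lemma apply_two_eq_apply_neg_one_of_sq_eq [Finite F] : φ 2 = χ (-1) := by
  classical
  have := Fintype.ofFinite F
  have hφ_sq := (orderOf_eq_prime_iff.mp hφ).1
  have hneg_one : φ (-1) = 1 := mulChar_apply_neg_one_of_sq_eq hχ
  obtain ⟨i, hi⟩ : ∃ i : F, i ^ 2 = -1 := by
    by_contra! h
    have hcard := card_filter_sq_eq hφ (-1)
    rw [Finset.filter_false_of_mem fun i _ ↦ h i, Finset.card_empty, Nat.cast_zero, hneg_one,
      one_add_one_eq_two] at hcard
    exact NeZero.ne (2 : R) hcard.symm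
  have hi₁ : 1 + i ≠ 0 := by
    intro h
    refine Ring.two_ne_zero (ringChar_ne_two_of_orderOf_eq_two hφ) ?_
    linear_combination hi + (1 - i) * h
  rw [show (2 : F) = -1 * i * (1 + i) ^ 2 by linear_combination (i + 2) * hi,
    mulChar_apply_mul_sq hφ_sq _ hi₁.isUnit, map_mul, hneg_one, one_mul, ← hχ,
    MulChar.pow_apply' _ two_ne_zero, ← map_pow, hi]

lemma sum_units_mul_comp_add_inv_of_sq_eq [Fintype Fˣ] (H : F → R) :
    ∑ x : Fˣ, χ x * H (x + (x : F)⁻¹) = ∑ m, φ (m + 2) * H (m ^ 2 - 2) := by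
  have hφ_sq := (orderOf_eq_prime_iff.mp hφ).1
  have hχ_inv : χ⁻¹ = φ * χ :=
    inv_eq_of_mul_eq_one_left (by rw [mul_assoc, ← sq, hχ, ← sq, hφ_sq])
  have hinv : ∑ x : Fˣ, χ x * H (x + (x : F)⁻¹) = ∑ x : Fˣ, φ x * (χ x * H (x + (x : F)⁻¹)) :=
    Fintype.sum_equiv (Equiv.inv Fˣ) _ _ fun x ↦ by
      rw [Equiv.inv_apply, ← mul_assoc, ← MulChar.mul_apply, ← hχ_inv, mulChar_inv_apply_coe,
        inv_inv, Units.val_inv_eq_inv_val, inv_inv, add_comm (x : F)]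
  have hneg : ∑ m, φ (m - 2) * H (m ^ 2 - 2) = ∑ m, φ (m + 2) * H (m ^ 2 - 2) :=
    Fintype.sum_equiv (Equiv.neg F) _ _ fun m ↦ by
      rw [Equiv.neg_apply, neg_sq, show -m + 2 = -1 * (m - 2) by ring, map_mul,
        mulChar_apply_neg_one_of_sq_eq hχ, one_mul]
  have hsq (s : Fˣ) : χ (s ^ 2) * H (s ^ 2 + ((s : F) ^ 2)⁻¹) =
      φ s * H ((s + (s : F)⁻¹) ^ 2 - 2) := by
    rw [map_pow, ← MulChar.pow_apply_coe, hχ, show ((s : F) + (s : F)⁻¹) ^ 2 - 2 =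
      s ^ 2 + ((s : F) ^ 2)⁻¹ by field_simp; ring]
  refine mul_left_cancel₀ (NeZero.ne (2 : R)) ?_
  calc 2 * ∑ x : Fˣ, χ x * H (x + (x : F)⁻¹)
      = ∑ x : F, (1 + φ x) * (χ x * H (x + x⁻¹)) := by
        rw [sum_eq_add_sum_units fun x ↦ (1 + φ x) * (χ x * H (x + x⁻¹))]
        simp only [MulChar.map_zero, zero_mul, mul_zero, zero_add, add_mul, one_mul,
          Finset.sum_add_distrib, ← hinv, two_mul]
    _ = ∑ s : Fˣ, φ s * H ((s + (s : F)⁻¹) ^ 2 - 2) := by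
        rw [← sum_comp_sq hφ fun x ↦ χ x * H (x + x⁻¹),
          sum_eq_add_sum_units fun s ↦ χ (s ^ 2) * H (s ^ 2 + (s ^ 2)⁻¹), zero_pow two_ne_zero,
          MulChar.map_zero, zero_mul, zero_add]
        exact Finset.sum_congr rfl fun s _ ↦ hsq s
    _ = 2 * ∑ m, φ (m + 2) * H (m ^ 2 - 2) := by
        rw [sum_units_mul_comp_add_inv hφ fun m ↦ H (m ^ 2 - 2)]
        simp only [add_mul, Finset.sum_add_distrib, hneg, two_mul]

end SquareRoot

lemma sum_apply_sq_mul_quadratic {t : F} (ht : t ≠ 0) :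
    ∑ z, φ (z * z * (z ^ 2 - 4 * t)) = φ 2 * ∑ m, φ ((m + 2) * (-(t * m ^ 2))) - 1 := by
  obtain ⟨hφ_sq, hφ_ne⟩ := orderOf_eq_prime_iff.mp hφ
  have h2 : (2 : F) ≠ 0 := Ring.two_ne_zero (ringChar_ne_two_of_orderOf_eq_two hφ)
  have hφ₂ : φ 2 * φ 2 = 1 := mulChar_apply_mul_self hφ_sq h2.isUnit
  have hφ₄ : φ (-(4 * t)) = φ (-t) := by
    rw [show -(4 * t) = -t * 2 ^ 2 by ring, mulChar_apply_mul_sq hφ_sq _ h2.isUnit]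
  have hleft : ∑ z, φ (z * z * (z ^ 2 - 4 * t)) = -1 - φ (-t) := by
    have h4t : -(4 * t) ≠ 0 := by
      rw [show -(4 * t) = -(2 * (2 * t)) by ring]
      exact neg_ne_zero.mpr (mul_ne_zero h2 (mul_ne_zero h2 ht))
    calc ∑ z, φ (z * z * (z ^ 2 - 4 * t))
        = ∑ z, φ ((z ^ 2 + -(4 * t)) * z ^ 2) :=
          Finset.sum_congr rfl fun z _ ↦ congrArg φ (by ring)
      _ = -1 - φ (-t) := by
          rw [sum_apply_mul_sq hφ_sq, sum_apply_sq_add hφ h4t, zero_pow two_ne_zero, zero_add, hφ₄]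
  have hright : ∑ m, φ ((m + 2) * (-(t * m ^ 2))) = -(φ 2 * φ (-t)) := by
    calc ∑ m, φ ((m + 2) * (-(t * m ^ 2)))
        = ∑ m, φ ((m + 2) * -t * m ^ 2) :=
          Finset.sum_congr rfl fun m _ ↦ congrArg φ (by ring)
      _ = -(φ 2 * φ (-t)) := by
          rw [sum_apply_mul_sq hφ_sq]
          simp only [map_mul, ← Finset.sum_mul, sum_mulChar_apply_add hφ_ne, zero_mul, zero_sub,
            zero_add]
  rw [hleft, hright]
  linear_combination φ (-t) * hφ₂

lemma sum_apply_mul_quadratic (a : F) {t : F} (ht : t ≠ 0) :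
    ∑ z, φ (z * (z + a) * (z ^ 2 - 4 * t)) =
      φ 2 * ∑ m, φ ((m + 2) * (a ^ 2 - t * m ^ 2)) - 1 := by
  rcases eq_or_ne a 0 with rfl | ha
  · simpa using sum_apply_sq_mul_quadratic hφ ht
  · exact sum_apply_mul_quadratic_of_ne_zero hφ ha t

end QuadraticCharacterSums

section BridgeSum

variable {F R : Type*} [Field F] [Fintype F] [CommRing R]

/-- The double character sum in terms of which both the hypergeometric value (for `ψ = φ * C`) and
the sum over the square roots of `χ₄ * C` are evaluated. -/
def bridgeSum (φ ψ : MulChar F R) : R :=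
  ∑ t, ψ t * ∑ m, φ ((m + 2) * ((1 + t) ^ 2 - t * m ^ 2))

variable [IsDomain R] {φ : MulChar F R} (hφ : orderOf φ = 2)
include hφ

lemma sum_units_apply_mul_apply_mul_apply [DecidableEq F] [Fintype Fˣ] (t : Fˣ) :
    ∑ w : Fˣ, φ (1 + ((t : F) * w * w)⁻¹) * φ (1 + t * w) * φ (1 + w) =
      φ t * ((if (t : F) = -1 then (Fintype.card F : R) else 0) +
        φ 2 * ∑ m, φ ((m + 2) * ((1 + t) ^ 2 - t * m ^ 2)) - 2) := by
  have hfactor (w : Fˣ) : φ (1 + ((t : F) * w * w)⁻¹) * φ (1 + t * w) * φ (1 + w) =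
      φ t * φ ((t * w + (w : F)⁻¹) * (t * w + (w : F)⁻¹ + (1 + t))) := by
    rw [← map_mul, ← map_mul, ← map_mul, ← mulChar_apply_mul_sq (orderOf_eq_prime_iff.mp hφ).1 _
      t.isUnit]
    congr 1
    field_simp
    ring
  have ht : 1 + (t : F) = 0 ↔ (t : F) = -1 := by rw [add_comm, add_eq_zero_iff_eq_neg]
  simp only [hfactor, ← Finset.mul_sum]
  rw [sum_units_comp_mul_add_inv hφ t.ne_zero fun z ↦ φ (z * (z + (1 + t)))]
  simp only [add_mul _ _ (φ _), one_mul, Finset.sum_add_distrib, mul_comm (φ (_ ^ 2 - 4 * _)),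
    ← map_mul φ (_ * (_ + (1 + (t : F)))), sum_apply_mul_add hφ,
    sum_apply_mul_quadratic hφ _ t.ne_zero, ht]
  ring

lemma sum_jacobiSum_mul_jacobiSum_mul_jacobiSum [HasEnoughRootsOfUnity R (Monoid.exponent Fˣ)]
    [Fintype Fˣ] [Fintype (MulChar F R)] {ψ : MulChar F R} (hψ : φ * ψ ≠ 1) :
    ∑ χ, jacobiSum χ (φ * χ)⁻¹ * jacobiSum (ψ * χ) (φ * (ψ * χ))⁻¹ *
        jacobiSum (ψ⁻¹ * χ) (φ * (ψ⁻¹ * χ))⁻¹ =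
      Fintype.card Fˣ * (Fintype.card F * (φ * ψ) (-1) + φ 2 * bridgeSum φ (φ * ψ)) := by
  classical
  simp only [jacobiSum_mul_inv_eq_mellinSum, sum_mellinSum_mul_mellinSum_mul_mellinSum]
  congr 1
  calc _ = mellinSum (fun t : Fˣ ↦ (if (t : F) = -1 then (Fintype.card F : R) else 0) +
        φ 2 * ∑ m, φ ((m + 2) * ((1 + t) ^ 2 - t * m ^ 2)) - 2) (φ * ψ) :=
        Finset.sum_congr rfl fun t _ ↦ by
          simp only [Units.val_inv_eq_inv_val, Units.val_mul,
            sum_units_apply_mul_apply_mul_apply hφ, MulChar.mul_apply]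
          ring
    _ = _ := by
        rw [mellinSum_coe_units fun t : F ↦ (if t = -1 then (Fintype.card F : R) else 0) +
          φ 2 * ∑ m, φ ((m + 2) * ((1 + t) ^ 2 - t * m ^ 2)) - 2]
        simp only [bridgeSum, mul_sub, mul_add, Finset.sum_sub_distrib, Finset.sum_add_distrib,
          ← Finset.sum_mul, MulChar.sum_eq_zero_of_ne_one hψ, mul_left_comm _ (φ 2),
          ← Finset.mul_sum, mul_ite, mul_zero, Finset.sum_ite_eq', Finset.mem_univ, if_true,
          zero_mul, sub_zero, mul_comm (Fintype.card F : R)]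

lemma sum_jacobiSum_mul_jacobiSum_of_sq_eq [HasEnoughRootsOfUnity R (Monoid.exponent Fˣ)]
    [CharZero R] [Fintype (MulChar F R)] [DecidableEq (MulChar F R)] {η : MulChar F R}
    (hη : η ^ 2 = φ) (ψ : MulChar F R) :
    ∑ χ with χ ^ 2 = η * ψ, jacobiSum χ (φ * χ)⁻¹ * jacobiSum (η * χ) (φ * (η * χ))⁻¹ =
      (φ * ψ) (-1) * bridgeSum φ (φ * ψ) := by
  classical
  have hinner (u : Fˣ) : ∑ v : Fˣ, φ (1 + u * (v : F)⁻¹) * (η (u * v) * φ (1 + u * v)) =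
      η u * ∑ m, φ ((m + 2) * ((1 - u) ^ 2 + u * m ^ 2)) := by
    have hprod (v : Fˣ) : φ (1 + u * (v : F)⁻¹) * (η (u * v) * φ (1 + u * v)) =
        η u * (η v * φ (1 + u ^ 2 + u * (v + (v : F)⁻¹))) := by
      rw [show 1 + (u : F) ^ 2 + u * (v + (v : F)⁻¹) = (1 + u * (v : F)⁻¹) * (1 + u * v) by
        field_simp; ring, map_mul, map_mul]
      ring
    simp only [hprod, ← Finset.mul_sum]
    rw [sum_units_mul_comp_add_inv_of_sq_eq hφ hη fun z ↦ φ (1 + u ^ 2 + u * z)]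
    have hsquare (m : F) : 1 + (u : F) ^ 2 + u * (m ^ 2 - 2) = (1 - u) ^ 2 + u * m ^ 2 := by ring
    simp only [hsquare, map_mul]
  calc _ = mellinSum (fun u : Fˣ ↦ ∑ m, φ ((m + 2) * ((1 - u) ^ 2 + u * m ^ 2))) (φ * ψ) := by
        simp only [jacobiSum_mul_inv_eq_mellinSum, mellinSum_mul_left,
          sum_mellinSum_mul_mellinSum_of_sq_eq, Units.val_mul, Units.val_inv_eq_inv_val, hinner]
        refine Finset.sum_congr rfl fun u _ ↦ ?_
        have hη_apply : φ u = η u ^ 2 := by rw [← MulChar.pow_apply_coe, hη]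
        simp only [MulChar.mul_apply, hη_apply]
        ring
    _ = ∑ u, (φ * ψ) u * ∑ m, φ ((m + 2) * ((1 - u) ^ 2 + u * m ^ 2)) :=
        mellinSum_coe_units (fun u ↦ ∑ m, φ ((m + 2) * ((1 - u) ^ 2 + u * m ^ 2))) _
    _ = (φ * ψ) (-1) * bridgeSum φ (φ * ψ) := by
        rw [bridgeSum, Finset.mul_sum]
        refine Fintype.sum_equiv (Equiv.neg F) _ _ fun u ↦ ?_
        rw [Equiv.neg_apply, ← mul_assoc, ← map_mul, neg_one_mul, neg_neg]
        simp only [← sub_eq_add_neg, neg_mul, sub_neg_eq_add]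

end BridgeSum

section Evaluation

variable {F : Type} [Field F] [Fintype F] {θ : AddChar F ℂ} {φ C : MulChar F ℂ}

lemma ffHyp_quadratic_twists_neg_one_eq_bridgeSum (hθ : θ.IsPrimitive) (hφ : orderOf φ = 2)
    (hC : C ≠ 1) (hφC : φ * C ≠ 1) :
    ffHyp θ ![φ, φ * C, φ * C⁻¹] ![1, C⁻¹, C] (-1) =
      (φ * C) (-1) + φ 2 * bridgeSum φ (φ * C) / Fintype.card F := by
  classical
  have := Fintype.ofFinite (MulChar F ℂ)
  obtain ⟨hφ_sq, hφ_ne⟩ := orderOf_eq_prime_iff.mp hφ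
  have hq : (Fintype.card F : ℂ) ≠ 0 := Nat.cast_ne_zero.mpr Fintype.card_ne_zero
  have hunits : (Fintype.card Fˣ : ℂ) = Fintype.card F - 1 := by
    rw [Fintype.card_eq_card_units_add_one (α := F), Nat.cast_add_one, add_sub_cancel_right]
  have hunits_ne : (Fintype.card F : ℂ) - 1 ≠ 0 :=
    hunits ▸ Nat.cast_ne_zero.mpr Fintype.card_ne_zero
  rw [ffHyp_quadratic_twists_neg_one hθ hφ_sq hφ_ne hC hφC,
    sum_jacobiSum_mul_jacobiSum_mul_jacobiSum hφ hφC, hunits]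
  field_simp

lemma sum_gaussSum_div_eq_bridgeSum [Fintype (MulChar F ℂ)] [DecidableEq (MulChar F ℂ)]
    (hθ : θ.IsPrimitive) (hφ : orderOf φ = 2) {η : MulChar F ℂ} (hη : η ^ 2 = φ) (hC : C ^ 4 ≠ 1) :
    ∑ D with D ^ 2 = η * C, gaussSum D θ * gaussSum (η * D) θ /
        (gaussSum (φ * D) θ * gaussSum (η⁻¹ * D) θ) =
      η (-1) * ((φ * C) (-1) * bridgeSum φ (φ * C)) / Fintype.card F := by
  obtain ⟨hφ_sq, hφ_ne⟩ := orderOf_eq_prime_iff.mp hφ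
  have hη₄ : η ^ 4 = 1 := by rw [pow_mul η 2 2, hη, hφ_sq]
  have hη₈ : η ^ 8 = 1 := by rw [pow_mul η 4 2, hη₄, one_pow]
  have hφ₈ : φ ^ 8 = 1 := by rw [pow_mul φ 2 4, hφ_sq, one_pow]
  rw [← sum_jacobiSum_mul_jacobiSum_of_sq_eq hφ hη, Finset.mul_sum, Finset.sum_div]
  refine Finset.sum_congr rfl fun D hD ↦ ?_
  have hD₈ : D ^ 8 ≠ 1 := by
    rwa [pow_mul D 2 4, (Finset.mem_filter_univ D).mp hD, mul_pow, hη₄, one_mul]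
  have hφD : φ * D ≠ 1 := mul_ne_one_of_pow_eq_one hφ₈ hD₈
  have hηD : η⁻¹ * D ≠ 1 := mul_ne_one_of_pow_eq_one (by rw [inv_pow, hη₈, inv_one]) hD₈
  rw [← hη] at hφ_ne hφD ⊢
  exact gaussSum_mul_gaussSum_div_gaussSum_mul_gaussSum hθ
    (Nat.cast_ne_zero.mpr Fintype.card_ne_zero) hη₄ hφ_ne hφD hηD

end Evaluation

open scoped Classical in
theorem stmt11 {F : Type} [Field F] [Fintype F] (hq : Fintype.card F % 4 = 1)
    (θ : AddChar F ℂ) (hθ : θ ≠ 1)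
    (φ : MulChar F ℂ) (hφ : orderOf φ = 2)
    (χ₄ : MulChar F ℂ) (hχ₄ : orderOf χ₄ = 4)
    (C : MulChar F ℂ) (hC : C ^ 4 ≠ 1) :
    letI : Fintype (MulChar F ℂ) := Fintype.ofFinite _
    ffHyp θ ![φ, φ * C, φ * C⁻¹] ![1, C⁻¹, C] (-1)
      = C (-1) *
          (1 + if ∃ D : MulChar F ℂ, D ^ 2 = χ₄ * C then
              ∑ D ∈ Finset.univ.filter (fun D : MulChar F ℂ => D ^ 2 = χ₄ * C),
                gaussSum D θ * gaussSum (χ₄ * D) θ /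
                  (gaussSum (φ * D) θ * gaussSum (χ₄⁻¹ * D) θ)
            else 0) := by
  let : Fintype (MulChar F ℂ) := Fintype.ofFinite _
  have hprim : θ.IsPrimitive := AddChar.IsPrimitive.of_ne_one hθ
  obtain ⟨hφ_sq, -⟩ := orderOf_eq_prime_iff.mp hφ
  have hη : χ₄ ^ 2 = φ := eq_of_orderOf_eq_two (by rw [orderOf_pow, hχ₄]; norm_num) hφ
  have hC₁ : C ≠ 1 := by rintro rfl; simp at hC
  have hφC : φ * C ≠ 1 := mul_ne_one_of_pow_eq_one (by rw [pow_mul φ 2 2, hφ_sq, one_pow]) hC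
  have hsign : (φ * C) (-1) = C (-1) := by
    rw [MulChar.mul_apply, mulChar_apply_neg_one_of_sq_eq hη, one_mul]
  rw [ite_exists_sum_filter, ffHyp_quadratic_twists_neg_one_eq_bridgeSum hprim hφ hC₁ hφC,
    sum_gaussSum_div_eq_bridgeSum hprim hφ hη hC, hsign, apply_two_eq_apply_neg_one_of_sq_eq hφ hη]
  linear_combination -(χ₄ (-1) * bridgeSum φ (φ * C) / Fintype.card F) * mulChar_neg_one_mul_self C
end

section
/- Let a, b ∈ ℂ with Re(b) < 1/4. Assume that for every nonnegative integer k one has 1/2 + a − b + k ≠ 0 and 1 + a − b + k ≠ 0, and that none of the numbers 1 + 2a − 2b, 1 − 4b, 1 − 2b, 1 + 2a − 4b, 1 + a, 1 + 2a, 1 + a − 2b is a nonpositive integer. Then _4F_4[a, a + 1/2, b, b + 1/2; 1, 1/2, 1/2 + a − b, 1 + a − b | 1] = (1/2) · [ Γ(1 + 2a − 2b) Γ(1 − 4b) / ( Γ(1 − 2b) Γ(1 + 2a − 4b) ) + Γ(1 + 2a − 2b) Γ(1 + a) / ( Γ(1 + 2a) Γ(1 + a − 2b) ) ], the series on the left converging.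 -/
open Complex

/-- The `k`-th coefficient of the classical generalized hypergeometric series with upper
parameters `a` and lower parameters `b` (indexed by a finite type `ι`):
`(∏ᵢ (aᵢ)ₖ) / (∏ᵢ (bᵢ)ₖ)` where `(x)ₖ` is the Pochhammer (rising factorial) symbol. -/
noncomputable def hypCoeff {ι : Type} [Fintype ι] (a b : ι → ℂ) (k : ℕ) : ℂ :=
  (∏ i, (ascPochhammer ℂ k).eval (a i)) / (∏ i, (ascPochhammer ℂ k).eval (b i))

/-- The classical generalized hypergeometric series `ₘFₘ[a ; b | z]`. -/
noncomputable def cHyp {ι : Type} [Fintype ι] (a b : ι → ℂ) (z : ℂ) : ℂ :=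
  ∑' k : ℕ, hypCoeff a b k * z ^ k

/-- A complex number is a nonpositive integer, i.e. lies in `{0, -1, -2, …}`. -/
def IsNonposInt (z : ℂ) : Prop := ∃ k : ℕ, z = -(k : ℂ)

/-
Split the even-indexed terms off `₂F₁(2a, 2b; 1 + 2a - 2b; ·)`: by the duplication formula for
Pochhammer symbols, the `₄F₄` series is the mean of the values of this function at `1` and `-1`.
Those are given by Gauss's and Kummer's summation theorems. Both follow from contiguous relations
at `z = ±1`, whose defect telescopes to a multiple of `₂F₁`-coefficients with raised parameters.
Iterating `c ↦ c + 1` (Gauss) or `a ↦ a + 2` (Kummer) gives a product of linear factors converging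
to a quotient of Gamma values. Gauss's series then tends to `1`, and Kummer's series to a limit
independent of `a`, which the trivial case `a = 0` determines. This needs `Re b < 0`; the relation
`b ↦ b - 1` extends Kummer's theorem to `Re b < 1 / 2`.
-/

section Pochhammer

theorem ascPochhammer_eval_eq_prod_range {R : Type*} [CommSemiring R] (n : ℕ) (x : R) :
    (ascPochhammer R n).eval x = ∏ j ∈ Finset.range n, (x + j) := by
  induction n with
  | zero => simp
  | succ n ih => rw [ascPochhammer_succ_eval, ih, Finset.prod_range_succ]

theorem ascPochhammer_succ_eval_left {R : Type*} [CommSemiring R] (n : ℕ) (x : R) :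
    (ascPochhammer R (n + 1)).eval x = x * (ascPochhammer R n).eval (x + 1) := by
  simp [ascPochhammer_succ_left]

theorem ascPochhammer_eval_two_mul {𝕂 : Type*} [Field 𝕂] [CharZero 𝕂] (n : ℕ) (x : 𝕂) :
    (ascPochhammer 𝕂 (2 * n)).eval (2 * x) =
      4 ^ n * ((ascPochhammer 𝕂 n).eval x * (ascPochhammer 𝕂 n).eval (x + 1 / 2)) := by
  induction n with
  | zero => simp
  | succ n ih =>
    rw [show 2 * (n + 1) = 2 * n + 1 + 1 by ring]
    simp only [ascPochhammer_succ_eval, ih]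
    push_cast
    ring

theorem norm_ascPochhammer_eval_le {𝕂 : Type*} [NormedField 𝕂] {x y : 𝕂}
    (h : ∀ j : ℕ, ‖x + j‖ ≤ ‖y + j‖) (n : ℕ) :
    ‖(ascPochhammer 𝕂 n).eval x‖ ≤ ‖(ascPochhammer 𝕂 n).eval y‖ := by
  simp only [ascPochhammer_eval_eq_prod_range, norm_prod]
  exact Finset.prod_le_prod (fun _ _ ↦ norm_nonneg _) fun j _ ↦ h j

end Pochhammer

section Contiguous

variable {𝕂 : Type*} [Field 𝕂]

local notation "coeff₂F₁" => ordinaryHypergeometricCoefficient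

theorem ordinaryHypergeometricCoefficient_zero (a b c : 𝕂) : coeff₂F₁ a b c 0 = 1 := by
  simp [ordinaryHypergeometricCoefficient]

theorem ordinaryHypergeometricCoefficient_comm (a b c : 𝕂) (n : ℕ) :
    coeff₂F₁ a b c n = coeff₂F₁ b a c n := by
  simp only [ordinaryHypergeometricCoefficient]
  ring

theorem ordinaryHypergeometricCoefficient_succ (a b c : 𝕂) (n : ℕ) :
    coeff₂F₁ a b c (n + 1) =
      (a + n) * (b + n) / ((c + n) * (n + 1)) * coeff₂F₁ a b c n := by
  simp only [ordinaryHypergeometricCoefficient, ascPochhammer_succ_eval, Nat.factorial_succ,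
    Nat.cast_mul, Nat.cast_succ, mul_inv, div_eq_mul_inv]
  ring

theorem ordinaryHypergeometricCoefficient_succ_left (a b c : 𝕂) (n : ℕ) :
    coeff₂F₁ a b c (n + 1) =
      a * b / (c * (n + 1)) * coeff₂F₁ (a + 1) (b + 1) (c + 1) n := by
  simp only [ordinaryHypergeometricCoefficient, ascPochhammer_succ_eval_left, Nat.factorial_succ,
    Nat.cast_mul, Nat.cast_succ, mul_inv, div_eq_mul_inv]
  ring

theorem mul_ordinaryHypergeometricCoefficient_add_one_left (a b c : 𝕂) (n : ℕ) :
    a * coeff₂F₁ (a + 1) b c n = (a + n) * coeff₂F₁ a b c n := by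
  have h : a * (ascPochhammer 𝕂 n).eval (a + 1) = (ascPochhammer 𝕂 n).eval a * (a + n) := by
    rw [← ascPochhammer_succ_eval_left, ascPochhammer_succ_eval]
  simp only [ordinaryHypergeometricCoefficient]
  linear_combination
    (n.factorial : 𝕂)⁻¹ * (ascPochhammer 𝕂 n).eval b * ((ascPochhammer 𝕂 n).eval c)⁻¹ * h

theorem mul_ordinaryHypergeometricCoefficient_add_one_middle (a b c : 𝕂) (n : ℕ) :
    b * coeff₂F₁ a (b + 1) c n = (b + n) * coeff₂F₁ a b c n := by
  rw [ordinaryHypergeometricCoefficient_comm a, ordinaryHypergeometricCoefficient_comm a,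
    mul_ordinaryHypergeometricCoefficient_add_one_left]

theorem ordinaryHypergeometricCoefficient_add_one_right (a b : 𝕂) {c : 𝕂} (hc : c ≠ 0)
    (n : ℕ) :
    coeff₂F₁ a b (c + 1) n = c / (c + n) * coeff₂F₁ a b c n := by
  have h : (ascPochhammer 𝕂 n).eval (c + 1) = (ascPochhammer 𝕂 n).eval c * (c + n) / c := by
    rw [← ascPochhammer_succ_eval, ascPochhammer_succ_eval_left, mul_div_cancel_left₀ _ hc]
  simp only [ordinaryHypergeometricCoefficient, h, div_eq_mul_inv, mul_inv, inv_inv]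
  ring

variable [CharZero 𝕂]

theorem gauss_telescoping (a b : 𝕂) {c : 𝕂} (hc : ∀ k : ℕ, c + k ≠ 0) (n : ℕ) :
    c * (c - a - b) * coeff₂F₁ a b c (n + 1) - (c - a) * (c - b) * coeff₂F₁ a b (c + 1) (n + 1) =
      -(a * b) * coeff₂F₁ (a + 1) (b + 1) (c + 1) (n + 1) -
        -(a * b) * coeff₂F₁ (a + 1) (b + 1) (c + 1) n := by
  have hc0 : c ≠ 0 := by simpa using hc 0
  have hcn : c + (n + 1) ≠ 0 := mod_cast hc (n + 1)
  have hcn' : c + 1 + n ≠ 0 := by rwa [add_assoc, add_comm 1]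
  rw [ordinaryHypergeometricCoefficient_add_one_right a b hc0,
    ordinaryHypergeometricCoefficient_succ_left a b c,
    ordinaryHypergeometricCoefficient_succ (a + 1)]
  push_cast
  field_simp
  ring

theorem kummer_telescoping_middle (a b : 𝕂) (hc : ∀ k : ℕ, a - b + k ≠ 0) (n : ℕ) :
    2 * (a - b) * (coeff₂F₁ a (b + 1) (a - b) (n + 1) * (-1) ^ (n + 1)) -
        (a - 2 * b) * (coeff₂F₁ a b (a - b + 1) (n + 1) * (-1) ^ (n + 1)) =
      a * (coeff₂F₁ (a + 1) (b + 1) (a - b + 1) (n + 1) * (-1) ^ (n + 1)) -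
        a * (coeff₂F₁ (a + 1) (b + 1) (a - b + 1) n * (-1) ^ n) := by
  have hc0 : a - b ≠ 0 := by simpa using hc 0
  have hcn : a - b + (n + 1) ≠ 0 := mod_cast hc (n + 1)
  have hcn' : a - b + 1 + n ≠ 0 := by rwa [add_assoc, add_comm 1]
  have hb := mul_ordinaryHypergeometricCoefficient_add_one_middle (a + 1) (b + 1) (a - b + 1) n
  rw [ordinaryHypergeometricCoefficient_add_one_right a b hc0,
    ordinaryHypergeometricCoefficient_succ_left a b (a - b),
    ordinaryHypergeometricCoefficient_succ_left a (b + 1) (a - b),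
    ordinaryHypergeometricCoefficient_succ (a + 1), pow_succ]
  push_cast
  field_simp
  linear_combination -2 * a * (a - b + (n + 1)) * (a - b + 1 + n) * hb

theorem kummer_telescoping_left (a b : 𝕂) (hc : ∀ k : ℕ, 1 + a - b + k ≠ 0) (n : ℕ) :
    (1 + a - b) * (2 + a - b) * (coeff₂F₁ a b (1 + a - b) (n + 1) * (-1) ^ (n + 1)) -
        (1 + a) * (2 + a - 2 * b) *
          (coeff₂F₁ (a + 2) b (3 + a - b) (n + 1) * (-1) ^ (n + 1)) =
      b * (b - 1) * (coeff₂F₁ (a + 1) (b + 1) (3 + a - b) (n + 1) * (-1) ^ (n + 1)) -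
        b * (b - 1) * (coeff₂F₁ (a + 1) (b + 1) (3 + a - b) n * (-1) ^ n) := by
  have hc0 : 1 + a - b ≠ 0 := by simpa using hc 0
  have hc1 : 1 + a - b + 1 ≠ 0 := mod_cast hc 1
  have hcn : 1 + a - b + 1 + n ≠ 0 := by simpa [add_assoc, add_comm] using hc (n + 1)
  have hcn' : 3 + a - b + n ≠ 0 := by
    convert hc (n + 2) using 1
    push_cast
    ring
  have hraise : (1 + a) * coeff₂F₁ (a + 2) b (3 + a - b) (n + 1) =
      (a + 2 + n) * (a + 1 + n) * b / ((3 + a - b + n) * (n + 1)) *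
        coeff₂F₁ (a + 1) (b + 1) (3 + a - b) n := by
    have ha := mul_ordinaryHypergeometricCoefficient_add_one_left (a + 1) b (3 + a - b) (n + 1)
    have hb := mul_ordinaryHypergeometricCoefficient_add_one_middle (a + 1) b (3 + a - b) n
    rw [ordinaryHypergeometricCoefficient_succ (a + 1), add_assoc a, one_add_one_eq_two] at ha
    push_cast at ha
    linear_combination ha - (a + 2 + n) * (a + 1 + n) / ((3 + a - b + n) * (n + 1)) * hb
  have hlower : (1 + a - b) * (2 + a - b) * coeff₂F₁ a b (1 + a - b) (n + 1) =
      a * b * (2 + a - b + n) / (n + 1) * coeff₂F₁ (a + 1) (b + 1) (3 + a - b) n := by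
    rw [show 3 + a - b = 1 + a - b + 1 + 1 by ring,
      ordinaryHypergeometricCoefficient_add_one_right _ _ hc1,
      ordinaryHypergeometricCoefficient_succ_left]
    field_simp
    ring
  have hrational : (2 + a - 2 * b) * ((a + 2 + n) * (a + 1 + n) * b /
        ((3 + a - b + n) * (n + 1))) - a * b * (2 + a - b + n) / (n + 1) =
      b * (b - 1) * (-((a + 1 + n) * (b + 1 + n) / ((3 + a - b + n) * (n + 1))) - 1) := by
    field_simp
    ring
  rw [ordinaryHypergeometricCoefficient_succ (a + 1), pow_succ]
  linear_combination (-1) ^ n * (2 + a - 2 * b) * hraise - (-1) ^ n * hlower +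
    (-1) ^ n * coeff₂F₁ (a + 1) (b + 1) (3 + a - b) n * hrational

end Contiguous

section Telescoping

open Filter Topology

theorem mul_tsum_eq_mul_tsum_of_telescoping {R : Type*} [Ring R] [TopologicalSpace R]
    [IsTopologicalRing R] [T2Space R] {α β : R} {s t g : ℕ → R} (hs : Summable s)
    (ht : Summable t) (h0 : α * s 0 - β * t 0 = g 0)
    (h : ∀ n, α * s (n + 1) - β * t (n + 1) = g (n + 1) - g n) (hg : Tendsto g atTop (𝓝 0)) :
    α * ∑' n, s n = β * ∑' n, t n := by
  have hpartial (n : ℕ) : ∑ k ∈ Finset.range (n + 1), (α * s k - β * t k) = g n := by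
    rw [Finset.sum_range_succ', Finset.sum_congr rfl fun k _ ↦ h k, Finset.sum_range_sub, h0,
      sub_add_cancel]
  have hlim := ((hs.hasSum.mul_left α).sub (ht.hasSum.mul_left β)).tendsto_sum_nat.comp
    (tendsto_add_atTop_nat 1)
  exact sub_eq_zero.mp (tendsto_nhds_unique hlim (hg.congr fun n ↦ (hpartial n).symm))

end Telescoping

section Asymptotics

open Filter Topology Asymptotics Nat

theorem tendsto_inv_GammaSeq (s : ℂ) :
    Tendsto (fun n ↦ (GammaSeq s n)⁻¹) atTop (𝓝 (Gamma s)⁻¹) := by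
  by_cases hs : Gamma s = 0
  · obtain ⟨m, rfl⟩ := Gamma_eq_zero_iff s |>.mp hs
    refine tendsto_const_nhds.congr' ?_
    filter_upwards [eventually_ge_atTop m] with n hn
    have hprod : ∏ j ∈ Finset.range (n + 1), (-(m : ℂ) + j) = 0 :=
      Finset.prod_eq_zero (Finset.mem_range_succ_iff.mpr hn) (neg_add_cancel _)
    simp [GammaSeq, hprod, hs]
  · exact (GammaSeq_tendsto_Gamma s).inv₀ hs

theorem ascPochhammer_succ_eval_eq_div_GammaSeq (s : ℂ) {n : ℕ} (hn : n ≠ 0) :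
    (ascPochhammer ℂ (n + 1)).eval s = (n : ℂ) ^ s * n ! / GammaSeq s n := by
  have hne : (n : ℂ) ^ s * n ! ≠ 0 :=
    mul_ne_zero (cpow_ne_zero_iff.mpr (.inl (mod_cast hn))) (mod_cast n.factorial_ne_zero)
  rw [GammaSeq, div_div_cancel₀ hne, ascPochhammer_eval_eq_prod_range]

theorem tendsto_ascPochhammer_ratio_div_cpow (u w x y : ℂ) :
    Tendsto (fun n : ℕ ↦ (ascPochhammer ℂ (n + 1)).eval u * (ascPochhammer ℂ (n + 1)).eval w /
        ((ascPochhammer ℂ (n + 1)).eval x * (ascPochhammer ℂ (n + 1)).eval y) /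
          (n : ℂ) ^ (u + w - x - y))
      atTop (𝓝 (Gamma x * Gamma y / (Gamma u * Gamma w))) := by
  have hlim := ((GammaSeq_tendsto_Gamma x).mul (GammaSeq_tendsto_Gamma y)).mul
    ((tendsto_inv_GammaSeq u).mul (tendsto_inv_GammaSeq w))
  rw [← mul_inv, ← div_eq_mul_inv] at hlim
  refine hlim.congr' ?_
  filter_upwards [eventually_ne_atTop 0] with n hn
  have hn' : (n : ℂ) ≠ 0 := mod_cast hn
  have hfact : (n ! : ℂ) ≠ 0 := mod_cast n.factorial_ne_zero
  simp only [ascPochhammer_succ_eval_eq_div_GammaSeq _ hn, cpow_sub _ _ hn', cpow_add _ _ hn']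
  have hpow (s : ℂ) : (n : ℂ) ^ s ≠ 0 := cpow_ne_zero_iff.mpr (.inl hn')
  have hu := hpow u
  have hw := hpow w
  have hx := hpow x
  have hy := hpow y
  field_simp

theorem ordinaryHypergeometricCoefficient_mul_pow_isBigO (a b c : ℂ) {z : ℂ} (hz : ‖z‖ ≤ 1) :
    (fun n : ℕ ↦ ordinaryHypergeometricCoefficient a b c (n + 1) * z ^ (n + 1)) =O[atTop]
      fun n : ℕ ↦ (n : ℝ) ^ ((a + b - c).re - 1) := by
  have hcoeff : (fun n : ℕ ↦ ordinaryHypergeometricCoefficient a b c (n + 1)) =O[atTop]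
      fun n : ℕ ↦ (n : ℂ) ^ (a + b - c - 1) := by
    refine isBigO_of_div_tendsto_nhds ?_ _
      ((tendsto_ascPochhammer_ratio_div_cpow a b c 1).congr fun n ↦ ?_)
    · filter_upwards [eventually_ne_atTop 0] with n hn h
      exact absurd h (by simp [cpow_eq_zero_iff, hn])
    · rw [Pi.div_apply, ordinaryHypergeometricCoefficient, ascPochhammer_eval_one]
      congr 1
      ring
  have hpow : (fun n : ℕ ↦ z ^ (n + 1)) =O[atTop] fun _ ↦ (1 : ℝ) :=
    .of_norm_le fun n ↦ by simpa using pow_le_one₀ (norm_nonneg z) hz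
  have hnorm : (fun n : ℕ ↦ (n : ℂ) ^ (a + b - c - 1)) =O[atTop]
      fun n : ℕ ↦ (n : ℝ) ^ ((a + b - c).re - 1) := by
    refine .of_bound' ?_
    filter_upwards [eventually_gt_atTop 0] with n hn
    rw [norm_natCast_cpow_of_pos hn, sub_re, one_re]
    exact le_abs_self _
  simpa using (hcoeff.trans hnorm).mul hpow

theorem summable_ordinaryHypergeometricCoefficient_mul_pow {a b c z : ℂ}
    (h : 0 < (c - a - b).re) (hz : ‖z‖ ≤ 1) :
    Summable fun n : ℕ ↦ ordinaryHypergeometricCoefficient a b c n * z ^ n := by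
  refine (summable_nat_add_iff 1).mp (summable_of_isBigO_nat ?_
    (ordinaryHypergeometricCoefficient_mul_pow_isBigO a b c hz))
  simp only [sub_re] at h
  exact Real.summable_nat_rpow.mpr (by simp only [sub_re, add_re]; linarith)

theorem tendsto_ordinaryHypergeometricCoefficient_mul_pow {a b c z : ℂ}
    (h : (a + b - c).re < 1) (hz : ‖z‖ ≤ 1) :
    Tendsto (fun n : ℕ ↦ ordinaryHypergeometricCoefficient a b c n * z ^ n) atTop (𝓝 0) := by
  have hrpow : Tendsto (fun n : ℕ ↦ (n : ℝ) ^ ((a + b - c).re - 1)) atTop (𝓝 0) := by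
    have := (tendsto_rpow_neg_atTop (sub_pos.mpr h)).comp tendsto_natCast_atTop_atTop
    simpa only [neg_sub, Function.comp_def] using this
  exact (tendsto_add_atTop_iff_nat 1).mp
    ((ordinaryHypergeometricCoefficient_mul_pow_isBigO a b c hz).trans_tendsto hrpow)

end Asymptotics

section Limits

open Filter Topology

theorem norm_le_norm_add_of_inner_nonneg {E : Type*} [NormedAddCommGroup E]
    [InnerProductSpace ℝ E] {x y : E} (h : 0 ≤ inner ℝ x y) : ‖x‖ ≤ ‖x + y‖ := by
  refine le_of_sq_le_sq ?_ (norm_nonneg _)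
  rw [norm_add_sq_real]
  linarith [sq_nonneg ‖y‖]

theorem eventually_norm_add_natCast_le {a c : ℂ} (h : a.re < c.re) :
    ∀ᶠ m : ℕ in atTop, ‖a + m‖ ≤ ‖c + m‖ := by
  have hinner (m : ℕ) : inner ℝ (a + m) (c - a) =
      (c.re - a.re) * m + ((c.re - a.re) * a.re + (c.im - a.im) * a.im) := by
    simp only [Complex.inner, map_add, map_natCast, mul_re, add_re, sub_re, sub_im, add_im, conj_re,
      conj_im, natCast_re, natCast_im]
    ring
  have htop : Tendsto (fun m : ℕ ↦ inner ℝ (a + m) (c - a)) atTop atTop := by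
    simp only [hinner]
    exact tendsto_atTop_add_const_right _ _
      (tendsto_natCast_atTop_atTop.const_mul_atTop (sub_pos.mpr h))
  filter_upwards [htop.eventually_ge_atTop 0] with m hm
  simpa only [show a + m + (c - a) = c + m by ring] using norm_le_norm_add_of_inner_nonneg hm

theorem ordinaryHypergeometric_eq_tsum_coefficient {𝕂 : Type*} [Field 𝕂] [TopologicalSpace 𝕂]
    [IsTopologicalRing 𝕂] (a b c z : 𝕂) :
    ₂F₁ a b c z = ∑' n : ℕ, ordinaryHypergeometricCoefficient a b c n * z ^ n :=
  ordinaryHypergeometric_sum_eq a b c z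

theorem tendsto_inv_ascPochhammer_eval_add_natCast (c : ℂ) (k : ℕ) :
    Tendsto (fun m : ℕ ↦ ((ascPochhammer ℂ k).eval (c + m))⁻¹) atTop (𝓝 (0 ^ k)) := by
  have hfactor (j : ℕ) : Tendsto (fun m : ℕ ↦ (c + m + j)⁻¹) atTop (𝓝 0) := by
    simpa [add_right_comm] using
      tendsto_add_mul_div_add_mul_atTop_nhds 1 (c + j) 0 (one_ne_zero (α := ℂ))
  simpa [ascPochhammer_eval_eq_prod_range] using
    tendsto_finsetProd (Finset.range k) fun j _ ↦ hfactor j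

theorem tendsto_ascPochhammer_eval_add_natCast_div (a c : ℂ) (k : ℕ) :
    Tendsto (fun m : ℕ ↦ (ascPochhammer ℂ k).eval (a + m) / (ascPochhammer ℂ k).eval (c + m))
      atTop (𝓝 1) := by
  have hfactor (j : ℕ) : Tendsto (fun m : ℕ ↦ (a + m + j) / (c + m + j)) atTop (𝓝 1) := by
    simpa [add_right_comm] using
      tendsto_add_mul_div_add_mul_atTop_nhds (a + j) (c + j) 1 (one_ne_zero (α := ℂ))
  simpa [ascPochhammer_eval_eq_prod_range] using
    tendsto_finsetProd (Finset.range k) fun j _ ↦ hfactor j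

theorem tendsto_ordinaryHypergeometric_add_natCast_right_of_re_pos {a b c z : ℂ} (hc : 0 < c.re)
    (h : 0 < (c - a - b).re) (hz : ‖z‖ ≤ 1) :
    Tendsto (fun m : ℕ ↦ ₂F₁ a b (c + m) z) atTop (𝓝 1) := by
  have hsum : Summable fun k : ℕ ↦ ‖ordinaryHypergeometricCoefficient a b c k‖ := by
    simpa using (summable_ordinaryHypergeometricCoefficient_mul_pow (z := 1) h (by simp)).norm
  have hne (k : ℕ) : (ascPochhammer ℂ k).eval c ≠ 0 := by
    rw [ascPochhammer_eval_eq_prod_range]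
    refine Finset.prod_ne_zero_iff.mpr fun j _ ↦ ne_zero_of_re_pos ?_
    simp only [add_re, natCast_re]
    positivity
  have hcoeff (m k : ℕ) : ordinaryHypergeometricCoefficient a b (c + m) k =
      ordinaryHypergeometricCoefficient a b c k *
        ((ascPochhammer ℂ k).eval c * ((ascPochhammer ℂ k).eval (c + m))⁻¹) := by
    simp only [ordinaryHypergeometricCoefficient]
    field_simp [hne k]
  have hle (m k : ℕ) : ‖(ascPochhammer ℂ k).eval c‖ ≤ ‖(ascPochhammer ℂ k).eval (c + m)‖ := by
    refine norm_ascPochhammer_eval_le (fun j ↦ ?_) k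
    rw [add_right_comm]
    refine norm_le_norm_add_of_inner_nonneg ?_
    simp only [Complex.inner, conj_re, conj_im, mul_re, natCast_re, natCast_im, add_re, add_im]
    ring_nf
    positivity
  have hlim : ∑' k : ℕ, ordinaryHypergeometricCoefficient a b c k *
      ((ascPochhammer ℂ k).eval c * 0 ^ k) * z ^ k = 1 := by
    rw [tsum_eq_single 0 fun k hk ↦ by simp [hk], ordinaryHypergeometricCoefficient_zero]
    simp
  simp only [ordinaryHypergeometric_eq_tsum_coefficient, ← hlim, hcoeff]
  refine tendsto_tsum_of_dominated_convergence hsum (fun k ↦ ?_) (.of_forall fun m k ↦ ?_)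
  · exact (((tendsto_inv_ascPochhammer_eval_add_natCast c k).const_mul _).const_mul _).mul_const _
  · rw [← div_eq_mul_inv, norm_mul, norm_mul, norm_div, norm_pow, mul_assoc]
    have hratio := div_le_one_of_le₀ (hle m k) (norm_nonneg _)
    exact mul_le_of_le_one_right (norm_nonneg _)
      (mul_le_one₀ hratio (by positivity) (pow_le_one₀ (norm_nonneg _) hz))

theorem tendsto_ordinaryHypergeometric_add_natCast_right (a b c : ℂ) {z : ℂ} (hz : ‖z‖ ≤ 1) :
    Tendsto (fun m : ℕ ↦ ₂F₁ a b (c + m) z) atTop (𝓝 1) := by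
  obtain ⟨m₀, hm₀⟩ := exists_nat_gt (max (-c.re) (a.re + b.re - c.re))
  obtain ⟨hc, hab⟩ := max_lt_iff.mp hm₀
  have hlim := tendsto_ordinaryHypergeometric_add_natCast_right_of_re_pos (a := a) (b := b)
    (c := c + m₀) (by rw [add_re, natCast_re]; linarith)
    (by simp only [sub_re, add_re, natCast_re]; linarith) hz
  refine (tendsto_add_atTop_iff_nat m₀).mp (hlim.congr fun m ↦ ?_)
  push_cast
  ring_nf

theorem tendsto_ordinaryHypergeometric_add_natCast_left_right {a b c z : ℂ} (hac : a.re < c.re)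
    (hb : b.re < 0) (hz : ‖z‖ ≤ 1) :
    Tendsto (fun m : ℕ ↦ ₂F₁ (a + m) b (c + m) z) atTop (𝓝 (₂F₁ 1 b 1 z)) := by
  have hsum : Summable fun k : ℕ ↦ ‖ordinaryHypergeometricCoefficient 1 b 1 k‖ := by
    simpa using (summable_ordinaryHypergeometricCoefficient_mul_pow (a := 1) (b := b)
      (c := 1) (z := 1) (by simpa) (by simp)).norm
  have hcoeff (m k : ℕ) : ordinaryHypergeometricCoefficient (a + m) b (c + m) k =
      ordinaryHypergeometricCoefficient 1 b 1 k *
        ((ascPochhammer ℂ k).eval (a + m) / (ascPochhammer ℂ k).eval (c + m)) := by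
    simp only [ordinaryHypergeometricCoefficient, ascPochhammer_eval_one]
    field_simp
  simp only [ordinaryHypergeometric_eq_tsum_coefficient]
  refine tendsto_tsum_of_dominated_convergence hsum (fun k ↦ ?_) ?_
  · simpa [hcoeff] using ((tendsto_ascPochhammer_eval_add_natCast_div a c k).const_mul
      (ordinaryHypergeometricCoefficient 1 b 1 k)).mul_const (z ^ k)
  · obtain ⟨m₀, hm₀⟩ := eventually_atTop.mp (eventually_norm_add_natCast_le hac)
    filter_upwards [eventually_ge_atTop m₀] with m hm k
    have hle : ‖(ascPochhammer ℂ k).eval (a + m)‖ ≤ ‖(ascPochhammer ℂ k).eval (c + m)‖ := by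
      refine norm_ascPochhammer_eval_le (fun j ↦ ?_) k
      simpa [add_assoc] using hm₀ (m + j) (by omega)
    rw [hcoeff, norm_mul, norm_mul, norm_div, norm_pow, mul_assoc]
    have hratio := div_le_one_of_le₀ hle (norm_nonneg _)
    exact mul_le_of_le_one_right (norm_nonneg _)
      (mul_le_one₀ hratio (by positivity) (pow_le_one₀ (norm_nonneg _) hz))

end Limits

section SummationTheorems

open Filter Topology

theorem eq_Gamma_div_mul_of_recurrence {u w x y L : ℂ} {s : ℕ → ℂ} (hx : ∀ k : ℕ, x + k ≠ 0)
    (hy : ∀ k : ℕ, y + k ≠ 0) (hsum : x + y = u + w)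
    (hs : ∀ n : ℕ, (x + n) * (y + n) * s n = (u + n) * (w + n) * s (n + 1))
    (hlim : Tendsto s atTop (𝓝 L)) :
    s 0 = Gamma x * Gamma y / (Gamma u * Gamma w) * L := by
  have hiter (n : ℕ) : s 0 = (ascPochhammer ℂ n).eval u * (ascPochhammer ℂ n).eval w /
      ((ascPochhammer ℂ n).eval x * (ascPochhammer ℂ n).eval y) * s n := by
    induction n with
    | zero => simp
    | succ n ih =>
      have hstep : s n = (u + n) * (w + n) / ((x + n) * (y + n)) * s (n + 1) := by
        rw [div_mul_eq_mul_div, eq_div_iff (mul_ne_zero (hx n) (hy n)), mul_comm, hs]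
      simp only [ascPochhammer_succ_eval, ih, hstep, div_eq_mul_inv, mul_inv]
      ring
  have hratio := tendsto_ascPochhammer_ratio_div_cpow u w x y
  rw [show u + w - x - y = 0 by linear_combination -hsum] at hratio
  simp only [cpow_zero, div_one] at hratio
  refine tendsto_nhds_unique tendsto_const_nhds
    ((hratio.mul (hlim.comp (tendsto_add_atTop_nat 1))).congr fun n ↦ (hiter (n + 1)).symm)

theorem ordinaryHypergeometric_one_contiguous {a b c : ℂ} (hc : ∀ k : ℕ, c + k ≠ 0)
    (h : 0 < (c - a - b).re) :
    c * (c - a - b) * ₂F₁ a b c (1 : ℂ) = (c - a) * (c - b) * ₂F₁ a b (c + 1) (1 : ℂ) := by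
  have hright : 0 < (c + 1 - a - b).re := by
    simp only [sub_re, add_re, one_re] at h ⊢
    linarith
  have hdefect : (a + 1 + (b + 1) - (c + 1)).re < 1 := by
    simp only [sub_re, add_re, one_re] at h ⊢
    linarith
  simp only [ordinaryHypergeometric_eq_tsum_coefficient]
  refine mul_tsum_eq_mul_tsum_of_telescoping
    (g := fun n ↦ -(a * b) * (ordinaryHypergeometricCoefficient (a + 1) (b + 1) (c + 1) n * 1 ^ n))
    (summable_ordinaryHypergeometricCoefficient_mul_pow h (by simp))
    (summable_ordinaryHypergeometricCoefficient_mul_pow hright (by simp)) ?_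
    (fun n ↦ ?_) ?_
  · simp only [ordinaryHypergeometricCoefficient_zero, pow_zero]
    ring
  · simpa only [one_pow, mul_one] using gauss_telescoping a b hc n
  · simpa only [mul_zero] using (tendsto_ordinaryHypergeometricCoefficient_mul_pow
      hdefect (by simp)).const_mul (-(a * b))

theorem gauss_ordinaryHypergeometric_one {a b c : ℂ} (hc : ∀ k : ℕ, c + k ≠ 0)
    (h : 0 < (c - a - b).re) :
    ₂F₁ a b c (1 : ℂ) = Gamma c * Gamma (c - a - b) / (Gamma (c - a) * Gamma (c - b)) := by
  have hre (k : ℕ) : 0 < (c - a - b + k).re := by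
    rw [add_re, natCast_re]
    positivity
  have hstep (n : ℕ) : (c + n) * (c - a - b + n) * ₂F₁ a b (c + n) (1 : ℂ) =
      (c - a + n) * (c - b + n) * ₂F₁ a b (c + (n + 1 : ℕ)) (1 : ℂ) := by
    have := ordinaryHypergeometric_one_contiguous (a := a) (b := b) (c := c + n)
      (fun k ↦ by simpa [add_assoc] using hc (n + k)) (by convert hre n using 2; ring)
    convert this using 2
    · ring
    · ring
    · push_cast
      rw [add_assoc]
  simpa using eq_Gamma_div_mul_of_recurrence (s := fun n : ℕ ↦ ₂F₁ a b (c + n) (1 : ℂ)) hc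
    (fun k ↦ ne_zero_of_re_pos (hre k)) (by ring) hstep
    (tendsto_ordinaryHypergeometric_add_natCast_right a b c (by simp))

theorem ordinaryHypergeometric_neg_one_contiguous_left {a b : ℂ}
    (hc : ∀ k : ℕ, 1 + a - b + k ≠ 0) (hb : b.re < 1 / 2) :
    (1 + a - b) * (2 + a - b) * ₂F₁ a b (1 + a - b) (-1 : ℂ) =
      (1 + a) * (2 + a - 2 * b) * ₂F₁ (a + 2) b (3 + a - b) (-1 : ℂ) := by
  have hleft : 0 < (1 + a - b - a - b).re := by
    simp only [sub_re, add_re, one_re]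
    linarith
  have hright : 0 < (3 + a - b - (a + 2) - b).re := by
    simp only [sub_re, add_re, re_ofNat]
    linarith
  have hdefect : (a + 1 + (b + 1) - (3 + a - b)).re < 1 := by
    simp only [sub_re, add_re, one_re, re_ofNat]
    linarith
  simp only [ordinaryHypergeometric_eq_tsum_coefficient]
  refine mul_tsum_eq_mul_tsum_of_telescoping
    (g := fun n ↦ b * (b - 1) *
      (ordinaryHypergeometricCoefficient (a + 1) (b + 1) (3 + a - b) n * (-1) ^ n))
    (summable_ordinaryHypergeometricCoefficient_mul_pow hleft (by simp))
    (summable_ordinaryHypergeometricCoefficient_mul_pow hright (by simp)) ?_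
    (fun n ↦ kummer_telescoping_left a b hc n) ?_
  · simp only [ordinaryHypergeometricCoefficient_zero, pow_zero]
    ring
  · simpa only [mul_zero] using (tendsto_ordinaryHypergeometricCoefficient_mul_pow
      hdefect (by simp)).const_mul (b * (b - 1))

theorem ordinaryHypergeometric_neg_one_contiguous_middle {a b : ℂ}
    (hc : ∀ k : ℕ, a - b + k ≠ 0) (hb : b.re < -1 / 2) :
    2 * (a - b) * ₂F₁ a (b + 1) (a - b) (-1 : ℂ) =
      (a - 2 * b) * ₂F₁ a b (a - b + 1) (-1 : ℂ) := by
  have hleft : 0 < (a - b - a - (b + 1)).re := by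
    simp only [sub_re, add_re, one_re]
    linarith
  have hright : 0 < (a - b + 1 - a - b).re := by
    simp only [sub_re, add_re, one_re]
    linarith
  have hdefect : (a + 1 + (b + 1) - (a - b + 1)).re < 1 := by
    simp only [sub_re, add_re, one_re]
    linarith
  simp only [ordinaryHypergeometric_eq_tsum_coefficient]
  refine mul_tsum_eq_mul_tsum_of_telescoping
    (g := fun n ↦ a *
      (ordinaryHypergeometricCoefficient (a + 1) (b + 1) (a - b + 1) n * (-1) ^ n))
    (summable_ordinaryHypergeometricCoefficient_mul_pow hleft (by simp))
    (summable_ordinaryHypergeometricCoefficient_mul_pow hright (by simp)) ?_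
    (fun n ↦ kummer_telescoping_middle a b hc n) ?_
  · simp only [ordinaryHypergeometricCoefficient_zero, pow_zero]
    ring
  · simpa only [mul_zero] using (tendsto_ordinaryHypergeometricCoefficient_mul_pow
      hdefect (by simp)).const_mul a

theorem ordinaryHypergeometric_neg_one_eq_mul_of_re_neg {a b : ℂ}
    (hc : ∀ k : ℕ, 1 + a - b + k ≠ 0) (hb : b.re < 0) :
    ₂F₁ a b (1 + a - b) (-1 : ℂ) =
      Gamma ((1 + a - b) / 2) * Gamma ((2 + a - b) / 2) /
        (Gamma ((1 + a) / 2) * Gamma (1 + a / 2 - b)) * ₂F₁ 1 b 1 (-1 : ℂ) := by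
  have hx (k : ℕ) : (1 + a - b) / 2 + k ≠ 0 := fun h ↦ hc (2 * k) (by
    push_cast
    linear_combination 2 * h)
  have hy (k : ℕ) : (2 + a - b) / 2 + k ≠ 0 := fun h ↦ hc (2 * k + 1) (by
    push_cast
    linear_combination 2 * h)
  have hstep (n : ℕ) : ((1 + a - b) / 2 + n) * ((2 + a - b) / 2 + n) *
        ₂F₁ (a + (2 * n : ℕ)) b (1 + a - b + (2 * n : ℕ)) (-1 : ℂ) =
      ((1 + a) / 2 + n) * (1 + a / 2 - b + n) *
        ₂F₁ (a + (2 * (n + 1) : ℕ)) b (1 + a - b + (2 * (n + 1) : ℕ)) (-1 : ℂ) := by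
    have h := ordinaryHypergeometric_neg_one_contiguous_left (a := a + 2 * n) (b := b)
      (fun k h ↦ hc (2 * n + k) (by push_cast; linear_combination h)) (by linarith)
    rw [show 1 + (a + 2 * n) - b = 1 + a - b + 2 * n by ring,
      show a + 2 * n + 2 = a + 2 * (n + 1) by ring,
      show 3 + (a + 2 * n) - b = 1 + a - b + 2 * (n + 1) by ring] at h
    push_cast
    linear_combination h / 4
  have hac : a.re < (1 + a - b).re := by
    simp only [sub_re, add_re, one_re]
    linarith
  have hlim : Tendsto (fun n : ℕ ↦ ₂F₁ (a + (2 * n : ℕ)) b (1 + a - b + (2 * n : ℕ)) (-1 : ℂ))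
      atTop (𝓝 (₂F₁ 1 b 1 (-1 : ℂ))) :=
    (tendsto_ordinaryHypergeometric_add_natCast_left_right hac hb (by simp)).comp
      (tendsto_id.const_mul_atTop' two_pos)
  simpa using eq_Gamma_div_mul_of_recurrence
    (s := fun n : ℕ ↦ ₂F₁ (a + (2 * n : ℕ)) b (1 + a - b + (2 * n : ℕ)) (-1 : ℂ))
    hx hy (by ring) hstep hlim

theorem ordinaryHypergeometric_zero_left {𝕂 : Type*} [Field 𝕂] [TopologicalSpace 𝕂]
    [IsTopologicalRing 𝕂] (b c z : 𝕂) : ₂F₁ 0 b c z = 1 := by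
  rw [ordinaryHypergeometric_eq_tsum_coefficient, tsum_eq_single 0 fun n hn ↦ by
    simp [ordinaryHypergeometricCoefficient, ascPochhammer_ne_zero_eval_zero _ hn]]
  simp [ordinaryHypergeometricCoefficient_zero]

theorem ordinaryHypergeometric_neg_one_of_re_neg {a b : ℂ}
    (hc : ∀ k : ℕ, 1 + a - b + k ≠ 0) (hb : b.re < 0) :
    ₂F₁ a b (1 + a - b) (-1 : ℂ) =
      2 ^ (-a) * (√Real.pi : ℂ) * Gamma (1 + a - b) /
        (Gamma ((1 + a) / 2) * Gamma (1 + a / 2 - b)) := by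
  have hclosed {a : ℂ} (hc : ∀ k : ℕ, 1 + a - b + k ≠ 0) : ₂F₁ a b (1 + a - b) (-1 : ℂ) =
      2 ^ (-a) * (√Real.pi : ℂ) * Gamma (1 + a - b) /
        (Gamma ((1 + a) / 2) * Gamma (1 + a / 2 - b)) * (2 ^ b * ₂F₁ 1 b 1 (-1 : ℂ)) := by
    have hdup := Gamma_mul_Gamma_add_half ((1 + a - b) / 2)
    rw [show (1 + a - b) / 2 + 1 / 2 = (2 + a - b) / 2 by ring,
      show 2 * ((1 + a - b) / 2) = 1 + a - b by ring,
      show 1 - (1 + a - b) = -a + b by ring, cpow_add _ _ two_ne_zero] at hdup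
    rw [ordinaryHypergeometric_neg_one_eq_mul_of_re_neg hc hb, hdup]
    ring
  have hconst : 2 ^ b * ₂F₁ 1 b 1 (-1 : ℂ) = 1 := by
    have hre (k : ℕ) : 0 < (1 + 0 - b + k).re := by
      simp only [add_re, sub_re, one_re, zero_re, natCast_re]
      linarith [k.cast_nonneg (α := ℝ)]
    have hGamma : Gamma (1 - b) ≠ 0 := Gamma_ne_zero_of_re_pos (by simpa using hre 0)
    have hpi : (√Real.pi : ℂ) ≠ 0 := mod_cast Real.sqrt_ne_zero'.mpr Real.pi_pos
    have hhalf : Gamma (1 / 2) = (√Real.pi : ℂ) := by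
      rw [← ofReal_one, ← ofReal_ofNat, ← ofReal_div, Gamma_ofReal, Real.Gamma_one_half_eq]
    have h := hclosed (a := 0) fun k ↦ ne_zero_of_re_pos (hre k)
    simp only [ordinaryHypergeometric_zero_left, neg_zero, cpow_zero, add_zero, zero_div, one_mul,
      hhalf, div_self (mul_ne_zero hpi hGamma)] at h
    exact h.symm
  rw [hclosed hc, hconst, mul_one]

theorem ordinaryHypergeometric_neg_one_of_re_lt_half {a b : ℂ}
    (hc : ∀ k : ℕ, 1 + a - b + k ≠ 0) (hb : b.re < 1 / 2) :
    ₂F₁ a b (1 + a - b) (-1 : ℂ) =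
      2 ^ (-a) * (√Real.pi : ℂ) * Gamma (1 + a - b) /
        (Gamma ((1 + a) / 2) * Gamma (1 + a / 2 - b)) := by
  have hc0 : 1 + a - b ≠ 0 := by simpa using hc 0
  have hshift (k : ℕ) : a - (b - 1) + k ≠ 0 := fun h ↦ hc k (by linear_combination h)
  have hrel := ordinaryHypergeometric_neg_one_contiguous_middle hshift
    (by rw [sub_re, one_re]; linarith)
  have hlow := ordinaryHypergeometric_neg_one_of_re_neg (a := a) (b := b - 1)
    (fun k h ↦ hc (k + 1) (by push_cast; linear_combination h)) (by rw [sub_re, one_re]; linarith)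
  have hnum : Gamma (1 + a - b + 1) = (1 + a - b) * Gamma (1 + a - b) := Gamma_add_one _ hc0
  have hden := one_div_Gamma_eq_self_mul_one_div_Gamma_add_one (1 + a / 2 - b)
  rw [show a - (b - 1) = 1 + a - b by ring, sub_add_cancel] at hrel
  rw [show 1 + a - (b - 1) = 1 + a - b + 1 by ring,
    show 1 + a / 2 - (b - 1) = 1 + a / 2 - b + 1 by ring, hnum] at hlow
  rw [hlow] at hrel
  refine mul_left_cancel₀ (mul_ne_zero two_ne_zero hc0) (hrel.trans ?_)
  simp only [div_eq_mul_inv, mul_inv] at hden ⊢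
  rw [hden]
  ring

theorem kummer_ordinaryHypergeometric_neg_one {a b : ℂ} (hc : ∀ k : ℕ, 1 + a - b + k ≠ 0)
    (ha : ∀ k : ℕ, 1 + a / 2 + k ≠ 0) (hb : b.re < 1 / 2) :
    ₂F₁ a b (1 + a - b) (-1 : ℂ) =
      Gamma (1 + a - b) * Gamma (1 + a / 2) / (Gamma (1 + a) * Gamma (1 + a / 2 - b)) := by
  have hGamma : Gamma (1 + a / 2) ≠ 0 :=
    Gamma_ne_zero fun k h ↦ ha k (by rw [h, neg_add_cancel])
  have hdup := Gamma_mul_Gamma_add_half ((1 + a) / 2)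
  rw [show (1 + a) / 2 + 1 / 2 = 1 + a / 2 by ring, show 2 * ((1 + a) / 2) = 1 + a by ring,
    show 1 - (1 + a) = -a by ring] at hdup
  have hratio : 2 ^ (-a) * (√Real.pi : ℂ) / Gamma ((1 + a) / 2) =
      Gamma (1 + a / 2) / Gamma (1 + a) := by
    have hpow : (2 : ℂ) ^ (-a) * (√Real.pi : ℂ) ≠ 0 := mul_ne_zero
      (cpow_ne_zero_iff.mpr (.inl two_ne_zero)) (mod_cast Real.sqrt_ne_zero'.mpr Real.pi_pos)
    rw [← mul_div_mul_right _ _ hGamma, hdup, mul_assoc (Gamma _), mul_comm (Gamma (1 + a)),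
      mul_div_mul_left _ _ hpow]
  rw [ordinaryHypergeometric_neg_one_of_re_lt_half hc hb]
  linear_combination Gamma (1 + a - b) / Gamma (1 + a / 2 - b) * hratio

end SummationTheorems

section EvenPart

theorem summable_comp_two_mul {E : Type*} [NormedAddCommGroup E] [CompleteSpace E] {u : ℕ → E}
    (hu : Summable u) : Summable fun k ↦ u (2 * k) :=
  hu.comp_injective (mul_right_injective₀ two_ne_zero)

theorem two_mul_tsum_two_mul {R : Type*} [NormedRing R] [CompleteSpace R] {u : ℕ → R}
    (hu : Summable u) : 2 * ∑' k, u (2 * k) = ∑' k, u k + ∑' k, u k * (-1) ^ k := by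
  have he := summable_comp_two_mul hu
  have ho : Summable fun k ↦ u (2 * k + 1) :=
    hu.comp_injective ((add_left_injective 1).comp (mul_right_injective₀ two_ne_zero))
  have hsigned : ∑' k, u (2 * k) + -∑' k, u (2 * k + 1) = ∑' k, u k * (-1) ^ k := by
    rw [← tsum_neg, ← tsum_even_add_odd (f := fun k ↦ u k * (-1) ^ k)
      (by simpa [pow_mul] using he) (by simpa [pow_succ, pow_mul] using ho.neg)]
    simp [pow_succ, pow_mul]
  rw [← hsigned, ← tsum_even_add_odd he ho]
  noncomm_ring

theorem hypCoeff_four_eq_coefficient_two_mul (a b c : ℂ) (k : ℕ) :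
    hypCoeff ![a, a + 1 / 2, b, b + 1 / 2] ![1, 1 / 2, c, c + 1 / 2] k =
      ordinaryHypergeometricCoefficient (2 * a) (2 * b) (2 * c) (2 * k) := by
  have hfact : ((2 * k).factorial : ℂ) =
      4 ^ k * ((ascPochhammer ℂ k).eval 1 * (ascPochhammer ℂ k).eval (1 / 2)) := by
    have hdup := ascPochhammer_eval_two_mul k (1 / 2 : ℂ)
    rw [mul_one_div_cancel two_ne_zero, add_halves, ascPochhammer_eval_one] at hdup
    rw [hdup, mul_comm (Polynomial.eval _ _)]
  simp only [hypCoeff, Fin.prod_univ_four, ordinaryHypergeometricCoefficient, hfact,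
    ascPochhammer_eval_two_mul]
  simp only [Matrix.cons_val, ascPochhammer_eval_one, mul_inv]
  field_simp

theorem summable_hypCoeff_four_mul_one_pow {a b c : ℂ} (h : 0 < (2 * c - 2 * a - 2 * b).re) :
    Summable fun k : ℕ ↦
      hypCoeff ![a, a + 1 / 2, b, b + 1 / 2] ![1, 1 / 2, c, c + 1 / 2] k * (1 : ℂ) ^ k := by
  have hsum := summable_ordinaryHypergeometricCoefficient_mul_pow (z := 1) h (by simp)
  simpa only [hypCoeff_four_eq_coefficient_two_mul, one_pow] using summable_comp_two_mul hsum

theorem two_mul_cHyp_four_one {a b c : ℂ} (h : 0 < (2 * c - 2 * a - 2 * b).re) :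
    2 * cHyp ![a, a + 1 / 2, b, b + 1 / 2] ![1, 1 / 2, c, c + 1 / 2] 1 =
      ₂F₁ (2 * a) (2 * b) (2 * c) (1 : ℂ) + ₂F₁ (2 * a) (2 * b) (2 * c) (-1 : ℂ) := by
  have hsum := summable_ordinaryHypergeometricCoefficient_mul_pow (z := 1) h (by simp)
  simp only [one_pow, mul_one] at hsum
  simp only [cHyp, hypCoeff_four_eq_coefficient_two_mul,
    ordinaryHypergeometric_eq_tsum_coefficient, one_pow, mul_one]
  exact two_mul_tsum_two_mul hsum

theorem add_natCast_ne_zero_of_not_isNonposInt {z : ℂ} (hz : ¬ IsNonposInt z) (k : ℕ) :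
    z + k ≠ 0 :=
  fun h ↦ hz ⟨k, eq_neg_of_add_eq_zero_left h⟩

end EvenPart

theorem stmt12 (a b : ℂ) (hb : b.re < 1 / 4)
    (h1 : ∀ k : ℕ, 1 / 2 + a - b + k ≠ 0) (h2 : ∀ k : ℕ, 1 + a - b + k ≠ 0)
    (h3 : ¬ IsNonposInt (1 + 2 * a - 2 * b)) (h4 : ¬ IsNonposInt (1 - 4 * b))
    (h5 : ¬ IsNonposInt (1 - 2 * b)) (h6 : ¬ IsNonposInt (1 + 2 * a - 4 * b))
    (h7 : ¬ IsNonposInt (1 + a)) (h8 : ¬ IsNonposInt (1 + 2 * a))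
    (h9 : ¬ IsNonposInt (1 + a - 2 * b)) :
    Summable (fun k : ℕ =>
      hypCoeff ![a, a + 1 / 2, b, b + 1 / 2] ![1, 1 / 2, 1 / 2 + a - b, 1 + a - b] k
        * (1 : ℂ) ^ k) ∧
    cHyp ![a, a + 1 / 2, b, b + 1 / 2] ![1, 1 / 2, 1 / 2 + a - b, 1 + a - b] 1
      = (1 / 2) *
          (Gamma (1 + 2 * a - 2 * b) * Gamma (1 - 4 * b)
              / (Gamma (1 - 2 * b) * Gamma (1 + 2 * a - 4 * b))
            + Gamma (1 + 2 * a - 2 * b) * Gamma (1 + a)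
              / (Gamma (1 + 2 * a) * Gamma (1 + a - 2 * b))) := by
  have hc (k : ℕ) : 1 + 2 * a - 2 * b + k ≠ 0 := add_natCast_ne_zero_of_not_isNonposInt h3 k
  have ha (k : ℕ) : 1 + 2 * a / 2 + k ≠ 0 := by
    simpa using add_natCast_ne_zero_of_not_isNonposInt h7 k
  have hbre : (2 * b).re < 1 / 2 := by
    simp only [mul_re, re_ofNat, im_ofNat, zero_mul]
    linarith
  have hre : 0 < (1 + 2 * a - 2 * b - 2 * a - 2 * b).re := by
    rw [show 1 + 2 * a - 2 * b - 2 * a - 2 * b = 1 - 2 * b - 2 * b by ring]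
    simp only [sub_re, one_re]
    linarith
  have hdouble : 2 * (1 / 2 + a - b) = 1 + 2 * a - 2 * b := by ring
  rw [show 1 + a - b = 1 / 2 + a - b + 1 / 2 by ring]
  refine ⟨summable_hypCoeff_four_mul_one_pow (by rwa [hdouble]), ?_⟩
  have hsplit := two_mul_cHyp_four_one (a := a) (b := b) (c := 1 / 2 + a - b) (by rwa [hdouble])
  rw [hdouble, gauss_ordinaryHypergeometric_one hc hre,
    kummer_ordinaryHypergeometric_neg_one hc ha hbre,
    show 1 + 2 * a - 2 * b - 2 * a - 2 * b = 1 - 4 * b by ring,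
    show 1 + 2 * a - 2 * b - 2 * a = 1 - 2 * b by ring,
    show 1 + 2 * a - 2 * b - 2 * b = 1 + 2 * a - 4 * b by ring,
    mul_div_cancel_left₀ a two_ne_zero] at hsplit
  linear_combination hsplit / 2
end

section
/- Let a ∈ ℂ be such that 2a is not a nonzero integer, and assume none of the numbers 3/4 − 2a, 3/4 + 2a, a + 5/8, a + 7/8, −a + 5/8, −a + 7/8 is a nonpositive integer. Then _6F_6[1/4, 3/4, 1/4 + a, 3/4 + a, 1/4 − a, 3/4 − a; 1, 1/2, 1 − a, 1/2 − a, 1 + a, 1/2 + a | 1] = ( Γ(1 + 2a) Γ(1 − 2a) / (4π) ) · [ Γ(1/4)^2 / ( Γ(3/4 − 2a) Γ(3/4 + 2a) ) + √2 · π^2 / ( Γ(a + 5/8) Γ(a + 7/8) Γ(−a + 5/8) Γ(−a + 7/8) ) ], the series on the left converging. -/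
open Complex

/-!
The series consists of the even-index terms of the well-poised series
`₃F₂[1/2, 1/2 + 2a, 1/2 - 2a; 1 - 2a, 1 + 2a | z]` at `z = 1`, so it is half the sum of the values
of that `₃F₂` at `1` and `-1`. The first value is given by Dixon's theorem. Whipple's quadratic
transformation carries the second to `2 ^ (-1/2)` times a `₃F₂` at `1` that is summed by Whipple's
theorem.

For the two summation theorems, a telescoping identity relates the series to the one with one
upper and both lower parameters raised by `2`. Iterating, the shifted series tends to `1` while the
product of the accumulated factors tends to a quotient of Gamma values. The quadratic transformation
holds near `0` by the Saalschütz theorem on coefficients, on `4|z| < |1 - z|²` within the disc by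
analytic continuation, and at `-1` by continuity.
-/

section

open Polynomial Filter Topology Asymptotics Finset
open scoped Nat

local notation:1024 x:1024 "⁽" k "⁾" => eval x (ascPochhammer _ k)

lemma add_natCast_ne_zero {x : ℂ} (hx : ¬ IsNonposInt x) (n : ℕ) : x + n ≠ 0 :=
  fun h => hx ⟨n, eq_neg_of_add_eq_zero_left h⟩

lemma not_isNonposInt_add_natCast {x : ℂ} (hx : ¬ IsNonposInt x) (n : ℕ) :
    ¬ IsNonposInt (x + n) :=
  fun ⟨k, hk⟩ => hx ⟨k + n, by push_cast; linear_combination hk⟩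

lemma not_isNonposInt_of_re_pos {x : ℂ} (hx : 0 < x.re) : ¬ IsNonposInt x := by
  rintro ⟨k, rfl⟩
  rw [neg_re, natCast_re] at hx
  linarith [k.cast_nonneg (α := ℝ)]

lemma not_isNonposInt_half {x : ℂ} (hx : ¬ IsNonposInt x) : ¬ IsNonposInt (x / 2) :=
  fun ⟨k, hk⟩ => hx ⟨2 * k, by push_cast; linear_combination 2 * hk⟩

lemma not_isNonposInt_add_one_half {x : ℂ} (hx : ¬ IsNonposInt x) :
    ¬ IsNonposInt ((x + 1) / 2) :=
  fun ⟨k, hk⟩ => hx ⟨2 * k + 1, by push_cast; linear_combination 2 * hk⟩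

lemma Gamma_half_mul_Gamma_add_one_half (x : ℂ) :
    Gamma (x / 2) * Gamma ((x + 1) / 2) = Gamma x * 2 ^ (1 - x) * √Real.pi := by
  convert! Gamma_mul_Gamma_add_half (x / 2) using 3 <;> ring_nf

section Pochhammer

variable {x : ℂ}

lemma ascPochhammer_eval_eq_prod_range_s13 (x : ℂ) (k : ℕ) : x⁽k⁾ = ∏ j ∈ range k, (x + j) := by
  induction k with
  | zero => simp
  | succ k ih => rw [ascPochhammer_succ_eval, ih, prod_range_succ]

lemma ascPochhammer_eval_succ_left (x : ℂ) (k : ℕ) : x⁽k + 1⁾ = x * (x + 1)⁽k⁾ := by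
  simp [ascPochhammer_succ_left]

lemma ascPochhammer_eval_add (x : ℂ) (k m : ℕ) : x⁽k + m⁾ = x⁽k⁾ * (x + k)⁽m⁾ := by
  simp [← ascPochhammer_mul]

lemma ascPochhammer_eval_add_two (x : ℂ) (k : ℕ) :
    x * (x + 1) * (x + 2)⁽k⁾ = x⁽k⁾ * ((x + k) * (x + 1 + k)) := by
  have h := ascPochhammer_eval_add x 2 k
  rw [add_comm, ascPochhammer_succ_eval, ascPochhammer_succ_eval, ascPochhammer_succ_eval,
    ascPochhammer_succ_eval, ascPochhammer_zero, eval_one] at h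
  push_cast at h
  linear_combination -h

lemma ascPochhammer_eval_two_mul_s13 (x : ℂ) (k : ℕ) :
    x⁽2 * k⁾ = 4 ^ k * (x / 2)⁽k⁾ * ((x + 1) / 2)⁽k⁾ := by
  induction k with
  | zero => simp
  | succ k ih =>
    simp only [mul_add, mul_one, ascPochhammer_succ_eval, ih]
    push_cast
    ring

lemma ascPochhammer_eval_neg_natCast (k m : ℕ) :
    (-((k + m : ℕ) : ℂ))⁽k⁾ * m ! = (-1) ^ k * (k + m)! := by
  induction k with
  | zero => simp
  | succ k ih =>
    rw [ascPochhammer_eval_succ_left,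
      show (-((k + 1 + m : ℕ) : ℂ) + 1) = -((k + m : ℕ) : ℂ) by push_cast; ring,
      mul_assoc, ih, Nat.add_right_comm, Nat.factorial_succ]
    push_cast
    ring

lemma norm_ascPochhammer_eval_le_s13 {N : ℕ} (hx : ‖x‖ ≤ N + 1) (m : ℕ) :
    ‖x⁽m⁾‖ ≤ 2 ^ (N + m) * m ! := by
  rw [ascPochhammer_eval_eq_prod_range_s13, norm_prod]
  calc ∏ j ∈ range m, ‖x + j‖ ≤ ∏ j ∈ range m, ((N + 1 + j : ℕ) : ℝ) := by
        refine prod_le_prod (fun _ _ => norm_nonneg _) fun j _ => ?_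
        push_cast
        exact (norm_add_le x j).trans (by rw [norm_natCast]; gcongr)
    _ = (m ! * (N + m).choose m : ℕ) := by
        rw [← Nat.ascFactorial_eq_factorial_mul_choose, Nat.ascFactorial_eq_prod_range,
          Nat.cast_prod]
    _ ≤ 2 ^ (N + m) * m ! := by
        rw [mul_comm]
        exact_mod_cast Nat.mul_le_mul_right _ (Nat.choose_le_two_pow _ _)

lemma tendsto_ascPochhammer_eval_div (x : ℂ) :
    Tendsto (fun n : ℕ => x⁽n + 1⁾ / ((n : ℂ) ^ x * n !)) atTop (𝓝 (Gamma x)⁻¹) := by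
  by_cases hx : Gamma x = 0
  · obtain ⟨m, rfl⟩ := (Gamma_eq_zero_iff x).1 hx
    rw [hx, inv_zero]
    refine tendsto_const_nhds.congr' ?_
    filter_upwards [eventually_ge_atTop m] with n hn
    rw [ascPochhammer_eval_neg_coe_nat_of_lt (Nat.lt_succ_of_le hn), zero_div]
  · refine ((GammaSeq_tendsto_Gamma x).inv₀ hx).congr fun n => ?_
    rw [GammaSeq, inv_div, ascPochhammer_eval_eq_prod_range_s13]

lemma hasSum_ascPochhammer_eval_div_factorial (x : ℂ) {z : ℂ} (hz : ‖z‖ < 1) :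
    HasSum (fun m : ℕ => x⁽m⁾ / m ! * z ^ m) ((1 - z) ^ (-x)) := by
  have h := (one_div_one_sub_cpow_hasFPowerSeriesOnBall_zero x).hasSum
    (show z ∈ Metric.eball 0 1 by
      rw [Metric.mem_eball, edist_zero_right, ← ofReal_norm]
      exact ENNReal.ofReal_lt_one.2 hz)
  rw [zero_add, one_div, ← cpow_neg] at h
  convert! h using 2 with m
  rw [FormalMultilinearSeries.ofScalars_apply_eq, smul_eq_mul, ← Ring.multichoose_eq]
  congr 1
  rw [div_eq_iff (by exact_mod_cast m.factorial_ne_zero), mul_comm, ← nsmul_eq_mul,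
    Ring.factorial_nsmul_multichoose_eq_ascPochhammer, ascPochhammer_smeval_eq_eval]

end Pochhammer

section Growth

variable {ι : Type} [Fintype ι] {a b : ι → ℂ}

lemma hypCoeff_zero (a b : ι → ℂ) : hypCoeff a b 0 = 1 := by simp [hypCoeff]

lemma hypCoeff_succ (a b : ι → ℂ) (k : ℕ) :
    hypCoeff a b (k + 1) = hypCoeff a b k * ∏ i, (a i + k) / (b i + k) := by
  simp only [hypCoeff, ascPochhammer_succ_eval, prod_mul_distrib, prod_div_distrib]
  rw [mul_div_mul_comm]

lemma summable_norm_hypCoeff_mul_pow (a b : ι → ℂ) {r : ℝ} (hr₀ : 0 ≤ r) (hr : r < 1) :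
    Summable fun k => ‖hypCoeff a b k‖ * r ^ k := by
  obtain ⟨q, hrq, hq⟩ := exists_between hr
  have hratio : Tendsto (fun k : ℕ => ‖∏ i, (a i + k) / (b i + k)‖ * r) atTop (𝓝 r) := by
    have h (i : ι) : Tendsto (fun k : ℕ => (a i + k) / (b i + k)) atTop (𝓝 1) := by
      simpa using tendsto_add_mul_div_add_mul_atTop_nhds (a i) (b i) (1 : ℂ) one_ne_zero
    simpa using (tendsto_finsetProd univ fun i _ => h i).norm.mul_const r
  refine summable_of_ratio_norm_eventually_le hq ?_
  filter_upwards [hratio.eventually_le_const hrq] with k hk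
  rw [Real.norm_of_nonneg (by positivity), Real.norm_of_nonneg (by positivity), hypCoeff_succ,
    norm_mul, pow_succ]
  calc _ = ‖∏ i, (a i + k) / (b i + k)‖ * r * (‖hypCoeff a b k‖ * r ^ k) := by ring
    _ ≤ _ := by gcongr

lemma analyticOnNhd_cHyp (a b : ι → ℂ) : AnalyticOnNhd ℂ (cHyp a b) (Metric.ball 0 1) := by
  refine DifferentiableOn.analyticOnNhd (fun z hz => ?_) Metric.isOpen_ball
  obtain ⟨r, hzr, hr⟩ := exists_between (mem_ball_zero_iff.1 hz)
  have hdiff : DifferentiableOn ℂ (cHyp a b) (Metric.ball 0 r) :=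
    differentiableOn_tsum_of_summable_norm
      (summable_norm_hypCoeff_mul_pow a b ((norm_nonneg z).trans hzr.le) hr)
      (fun k => by fun_prop) Metric.isOpen_ball fun k w hw => by
        rw [norm_mul, norm_pow]
        gcongr
        exact (mem_ball_zero_iff.1 hw).le
  exact (hdiff.differentiableAt
    (Metric.isOpen_ball.mem_nhds (mem_ball_zero_iff.2 hzr))).differentiableWithinAt

lemma continuousOn_cHyp (h : Summable (hypCoeff a b)) :
    ContinuousOn (cHyp a b) (Metric.closedBall 0 1) :=
  continuousOn_tsum (fun k => by fun_prop) h.norm fun k z hz => by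
    rw [norm_mul, norm_pow]
    exact mul_le_of_le_one_right (norm_nonneg _)
      (pow_le_one₀ (norm_nonneg z) (mem_closedBall_zero_iff.1 hz))

lemma cHyp_one (a b : ι → ℂ) : cHyp a b 1 = ∑' k, hypCoeff a b k := by simp [cHyp]

lemma tendsto_hypCoeff_succ_div_cpow (hb : ∀ i, ¬ IsNonposInt (b i)) :
    Tendsto (fun n : ℕ => hypCoeff a b (n + 1) / (n : ℂ) ^ (∑ i, a i - ∑ i, b i)) atTop
      (𝓝 (∏ i, Gamma (b i) / Gamma (a i))) := by
  have hlim (x : ι → ℂ) :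
      Tendsto (fun n : ℕ => ∏ i, (x i)⁽n + 1⁾ / ((n : ℂ) ^ x i * n !)) atTop
        (𝓝 (∏ i, (Gamma (x i))⁻¹)) :=
    tendsto_finsetProd univ fun i _ => tendsto_ascPochhammer_eval_div (x i)
  have hden : ∏ i, (Gamma (b i))⁻¹ ≠ 0 := prod_ne_zero_iff.2 fun i _ =>
    inv_ne_zero (mt (Gamma_eq_zero_iff _).1 (hb i))
  have hval : (∏ i, (Gamma (a i))⁻¹) / ∏ i, (Gamma (b i))⁻¹ = ∏ i, Gamma (b i) / Gamma (a i) := by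
    rw [← prod_div_distrib]
    exact prod_congr rfl fun i _ => by rw [inv_div_inv]
  rw [← hval]
  refine ((hlim a).div (hlim b) hden).congr' ?_
  filter_upwards [eventually_ne_atTop 0] with n hn
  have hn' : (n : ℂ) ≠ 0 := Nat.cast_ne_zero.2 hn
  have hcpow (x : ι → ℂ) : ∏ i, (n : ℂ) ^ x i = (n : ℂ) ^ ∑ i, x i := by
    simp only [cpow_def_of_ne_zero hn', mul_sum, exp_sum]
  have hfac : (n ! : ℂ) ≠ 0 := Nat.cast_ne_zero.2 n.factorial_ne_zero
  simp only [Pi.div_apply, hypCoeff, prod_div_distrib, prod_mul_distrib, hcpow, prod_const,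
    cpow_sub _ _ hn']
  have hpow (x : ℂ) : (n : ℂ) ^ x ≠ 0 := by simp [cpow_eq_zero_iff, hn']
  have := hpow (∑ i, a i)
  have := hpow (∑ i, b i)
  field_simp

lemma tendsto_hypCoeff (hb : ∀ i, ¬ IsNonposInt (b i)) (hab : ∑ i, a i = ∑ i, b i) :
    Tendsto (hypCoeff a b) atTop (𝓝 (∏ i, Gamma (b i) / Gamma (a i))) := by
  rw [← tendsto_add_atTop_iff_nat 1]
  simpa [hab] using tendsto_hypCoeff_succ_div_cpow (a := a) hb

lemma isBigO_hypCoeff_succ (hb : ∀ i, ¬ IsNonposInt (b i)) :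
    (fun n => hypCoeff a b (n + 1)) =O[atTop]
      fun n : ℕ => (n : ℝ) ^ (∑ i, a i - ∑ i, b i).re := by
  have hne : ∀ᶠ n : ℕ in atTop,
      (n : ℂ) ^ (∑ i, a i - ∑ i, b i) = 0 → hypCoeff a b (n + 1) = 0 := by
    filter_upwards [eventually_ne_atTop 0] with n hn h
    exact absurd ((cpow_eq_zero_iff _ _).1 h).1 (Nat.cast_ne_zero.2 hn)
  refine (isBigO_of_div_tendsto_nhds hne _ (tendsto_hypCoeff_succ_div_cpow hb)).trans ?_
  refine .of_bound 1 ?_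
  filter_upwards [eventually_gt_atTop 0] with n hn
  rw [norm_natCast_cpow_of_pos hn, Real.norm_of_nonneg (by positivity), one_mul]

lemma summable_hypCoeff (hb : ∀ i, ¬ IsNonposInt (b i))
    (hab : (∑ i, a i - ∑ i, b i).re < -1) : Summable (hypCoeff a b) :=
  (summable_nat_add_iff 1).1 <|
    summable_of_isBigO_nat (Real.summable_nat_rpow.2 hab) (isBigO_hypCoeff_succ hb)

lemma tendsto_natCast_mul_hypCoeff (hb : ∀ i, ¬ IsNonposInt (b i))
    (hab : (∑ i, a i - ∑ i, b i).re < -1) :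
    Tendsto (fun n : ℕ => n * hypCoeff a b n) atTop (𝓝 0) := by
  rw [← tendsto_add_atTop_iff_nat 1]
  have hsucc : (fun n : ℕ => ((n + 1 : ℕ) : ℂ)) =O[atTop] fun n : ℕ => (n : ℝ) := by
    refine .of_bound 2 ?_
    filter_upwards [eventually_ge_atTop 1] with n hn
    rw [norm_natCast, Real.norm_of_nonneg n.cast_nonneg]
    exact_mod_cast (by lia : n + 1 ≤ 2 * n)
  refine (hsucc.mul (isBigO_hypCoeff_succ hb)).trans_tendsto ?_
  have hneg : 0 < -((∑ i, a i - ∑ i, b i).re + 1) := by linarith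
  refine ((tendsto_rpow_neg_atTop hneg).comp tendsto_natCast_atTop_atTop).congr' ?_
  filter_upwards [eventually_gt_atTop 0] with n hn
  rw [Function.comp_apply, neg_neg, Real.rpow_add_one (by positivity), mul_comm]

end Growth

section Contiguous

variable {a b c e f : ℂ}

lemma hypCoeff_fin_three (a b c e f : ℂ) (k : ℕ) :
    hypCoeff ![a, b, c] ![1, e, f] k = a⁽k⁾ * b⁽k⁾ * c⁽k⁾ / (k ! * e⁽k⁾ * f⁽k⁾) := by
  simp [hypCoeff, Fin.prod_univ_three]

lemma not_isNonposInt_vecCons₃ (he : ¬ IsNonposInt e) (hf : ¬ IsNonposInt f) (i : Fin 3) :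
    ¬ IsNonposInt (![1, e, f] i) := by
  fin_cases i
  exacts [not_isNonposInt_of_re_pos (by simp), he, hf]

lemma re_sum_sub_sum_lt (hs : 0 < (e + f - a - b - c).re) :
    (∑ i, ![a, b, c] i - ∑ i, ![1, e, f] i).re < -1 := by
  simp only [Fin.sum_univ_three, Matrix.cons_val, sub_re, add_re, one_re] at hs ⊢
  linarith

lemma summable_hypCoeff_fin_three (he : ¬ IsNonposInt e) (hf : ¬ IsNonposInt f)
    (hs : 0 < (e + f - a - b - c).re) : Summable (hypCoeff ![a, b, c] ![1, e, f]) :=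
  summable_hypCoeff (not_isNonposInt_vecCons₃ he hf) (re_sum_sub_sum_lt hs)

lemma tendsto_quadratic_div (e f x₀ x₁ x₂ : ℂ) :
    Tendsto (fun k : ℕ => (x₀ + x₁ * k + x₂ * k ^ 2) / ((e + k) * (f + k))) atTop (𝓝 x₂) := by
  have h (u v w : ℂ) : Tendsto (fun k : ℕ => (u + v * k) / (w + k)) atTop (𝓝 v) := by
    simpa using tendsto_add_mul_div_add_mul_atTop_nhds u w v one_ne_zero
  have hinv (u w : ℂ) : Tendsto (fun k : ℕ => u / (w + k)) atTop (𝓝 0) := by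
    simpa using h u 0 w
  have hne (w : ℂ) : ∀ᶠ k : ℕ in atTop, w + k ≠ 0 := by
    filter_upwards [(tendsto_natCast_atTop_cobounded (α := ℂ)).eventually_ne_cobounded (-w)]
      with k hk h
    exact hk (eq_neg_of_add_eq_zero_right h)
  have hlim := (h (x₁ - x₂ * f) x₂ e).add
    ((hinv 1 e).mul (hinv (x₀ - (x₁ - x₂ * f) * f) f))
  rw [mul_zero, add_zero] at hlim
  refine hlim.congr' ?_
  filter_upwards [hne e, hne f] with k he hf
  field_simp
  ring

lemma hypCoeff_add_two (b c : ℂ) (ha₀ : a ≠ 0) (ha₁ : a + 1 ≠ 0) (he : ¬ IsNonposInt e)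
    (hf : ¬ IsNonposInt f) (k : ℕ) :
    hypCoeff ![a + 2, b, c] ![1, e + 2, f + 2] k = hypCoeff ![a, b, c] ![1, e, f] k *
      ((a + k) * (a + 1 + k) / (a * (a + 1)) * (e * (e + 1) / ((e + k) * (e + 1 + k))) *
        (f * (f + 1) / ((f + k) * (f + 1 + k)))) := by
  have hshift {x : ℂ} (h₀ : x ≠ 0) (h₁ : x + 1 ≠ 0) :
      (x + 2)⁽k⁾ = x⁽k⁾ * ((x + k) * (x + 1 + k)) / (x * (x + 1)) := by
    rw [← ascPochhammer_eval_add_two, mul_div_cancel_left₀ _ (mul_ne_zero h₀ h₁)]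
  have hne {x : ℂ} (hx : ¬ IsNonposInt x) : x ≠ 0 ∧ x + 1 ≠ 0 := by
    simpa using And.intro (add_natCast_ne_zero hx 0) (add_natCast_ne_zero hx 1)
  simp only [hypCoeff_fin_three, hshift ha₀ ha₁, hshift (hne he).1 (hne he).2,
    hshift (hne hf).1 (hne hf).2]
  simp only [div_eq_mul_inv, mul_inv_rev, inv_inv]
  ring

lemma hypCoeff_sub_mul_hypCoeff_add_two {ρ M p q : ℂ} (ha₀ : a ≠ 0) (ha₁ : a + 1 ≠ 0)
    (he : ¬ IsNonposInt e) (hf : ¬ IsNonposInt f)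
    (hM : M * (a * (a + 1)) = ρ * (e * (e + 1) * (f * (f + 1)))) {k : ℕ}
    (hcert : (e + k) * (e + 1 + k) * ((f + k) * (f + 1 + k)) - M * ((a + k) * (a + 1 + k)) =
      q * ((a + k) * (b + k) * (c + k)) - k * p * ((e + 1 + k) * (f + 1 + k))) :
    hypCoeff ![a, b, c] ![1, e, f] k - ρ * hypCoeff ![a + 2, b, c] ![1, e + 2, f + 2] k =
      q / ((e + (k + 1)) * (f + (k + 1))) * ((k + 1) * hypCoeff ![a, b, c] ![1, e, f] (k + 1)) -
        p / ((e + k) * (f + k)) * (k * hypCoeff ![a, b, c] ![1, e, f] k) := by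
  have hne {x : ℂ} (hx : ¬ IsNonposInt x) : x + k ≠ 0 ∧ x + 1 + k ≠ 0 := by
    refine ⟨add_natCast_ne_zero hx k, ?_⟩
    simpa [add_assoc, add_comm (k : ℂ)] using add_natCast_ne_zero hx (k + 1)
  obtain ⟨he₀, he₁⟩ := hne he
  obtain ⟨hf₀, hf₁⟩ := hne hf
  have hk : (1 + k : ℂ) ≠ 0 := by exact_mod_cast (by lia : 1 + k ≠ 0)
  have hρ : ρ * (e * (e + 1) * (f * (f + 1))) / (a * (a + 1)) = M :=
    (eq_div_of_mul_eq (mul_ne_zero ha₀ ha₁) hM).symm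
  rw [hypCoeff_add_two b c ha₀ ha₁ he hf, hypCoeff_succ _ _ k, Fin.prod_univ_three,
    show e + (k + 1) = e + 1 + k by ring, show f + (k + 1) = f + 1 + k by ring]
  simp only [Matrix.cons_val]
  calc _ = hypCoeff ![a, b, c] ![1, e, f] k *
        (1 - M * ((a + k) * (a + 1 + k) / ((e + k) * (e + 1 + k) * ((f + k) * (f + 1 + k))))) := by
        rw [← hρ]
        simp only [div_eq_mul_inv, mul_inv_rev]
        ring
    _ = hypCoeff ![a, b, c] ![1, e, f] k *
        ((q * ((a + k) * (b + k) * (c + k)) - k * p * ((e + 1 + k) * (f + 1 + k))) /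
          ((e + k) * (e + 1 + k) * ((f + k) * (f + 1 + k)))) := by
        rw [← hcert]
        field_simp
    _ = _ := by
        field_simp
        ring

lemma summable_hypCoeff_add_two (he : ¬ IsNonposInt e) (hf : ¬ IsNonposInt f)
    (hs : 0 < (e + f - a - b - c).re) :
    Summable (hypCoeff ![a + 2, b, c] ![1, e + 2, f + 2]) := by
  refine summable_hypCoeff_fin_three (by exact_mod_cast not_isNonposInt_add_natCast he 2)
    (by exact_mod_cast not_isNonposInt_add_natCast hf 2) ?_
  simp only [sub_re, add_re, re_ofNat] at hs ⊢
  linarith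

/- `P / D` is a Gosper certificate: `hcert` is the telescoping of the difference of the two
summands with denominators cleared. -/
lemma cHyp_one_eq_mul_cHyp_add_two {ρ M D x : ℂ} {P : ℕ → ℂ} (hD : D ≠ 0) (ha₀ : a ≠ 0)
    (ha₁ : a + 1 ≠ 0) (he : ¬ IsNonposInt e) (hf : ¬ IsNonposInt f)
    (hs : 0 < (e + f - a - b - c).re)
    (hM : M * (a * (a + 1)) = D * ρ * (e * (e + 1) * (f * (f + 1))))
    (hP : Tendsto (fun k => P k / ((e + k) * (f + k))) atTop (𝓝 x))
    (hcert : ∀ k : ℕ,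
      D * ((e + k) * (e + 1 + k) * ((f + k) * (f + 1 + k))) - M * ((a + k) * (a + 1 + k)) =
        P (k + 1) * ((a + k) * (b + k) * (c + k)) - k * P k * ((e + 1 + k) * (f + 1 + k))) :
    cHyp ![a, b, c] ![1, e, f] 1 = ρ * cHyp ![a + 2, b, c] ![1, e + 2, f + 2] 1 := by
  have hsum := summable_hypCoeff_fin_three he hf hs
  have hsum₂ := summable_hypCoeff_add_two he hf hs
  let G (k : ℕ) : ℂ := P k / D / ((e + k) * (f + k)) * (k * hypCoeff ![a, b, c] ![1, e, f] k)
  have hstep (k : ℕ) : hypCoeff ![a, b, c] ![1, e, f] k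
      - ρ * hypCoeff ![a + 2, b, c] ![1, e + 2, f + 2] k = G (k + 1) - G k := by
    have hM' : M / D * (a * (a + 1)) = ρ * (e * (e + 1) * (f * (f + 1))) := by
      rw [div_mul_eq_mul_div, hM, mul_assoc, mul_div_cancel_left₀ _ hD]
    simpa [G] using hypCoeff_sub_mul_hypCoeff_add_two ha₀ ha₁ he hf hM'
      (show _ = P (k + 1) / D * _ - k * (P k / D) * _ by
        linear_combination (norm := skip) hcert k / D
        field_simp
        ring)
  have hG : Tendsto G atTop (𝓝 0) := by
    simpa [G, div_right_comm _ D] using (hP.div_const D).mul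
      (tendsto_natCast_mul_hypCoeff (not_isNonposInt_vecCons₃ he hf) (re_sum_sub_sum_lt hs))
  have htel : HasSum (fun k => G (k + 1) - G k) 0 := by
    have hsummable := hsum.sub (hsum₂.mul_left ρ)
    simp only [hstep] at hsummable
    rw [hsummable.hasSum_iff_tendsto_nat]
    have hG₀ : G 0 = 0 := by simp [G]
    simpa only [sum_range_sub, hG₀, sub_zero] using hG
  rw [cHyp_one, cHyp_one, ← tsum_mul_left, ← sub_eq_zero,
    ← hsum.tsum_sub (hsum₂.mul_left ρ)]
  simpa only [hstep] using htel.tsum_eq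

end Contiguous

section ShiftedSums

lemma norm_hypCoeff_le {ι : Type} [Fintype ι] {a b a' b' : ι → ℂ}
    (h : ∀ k : ℕ, ‖∏ i, (a i + k) / (b i + k)‖ ≤ ‖∏ i, (a' i + k) / (b' i + k)‖) (k : ℕ) :
    ‖hypCoeff a b k‖ ≤ ‖hypCoeff a' b' k‖ := by
  induction k with
  | zero => simp [hypCoeff_zero]
  | succ k ih =>
    rw [hypCoeff_succ, hypCoeff_succ, norm_mul, norm_mul]
    exact mul_le_mul ih (h k) (norm_nonneg _) (norm_nonneg _)

lemma norm_hypCoeff_add_natCast_le (a b c e f : ℂ) {L M : ℝ} (hM : 0 < M) (ha : ‖a‖ ≤ L)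
    (he : ‖e‖ ≤ L) (hf : ‖f‖ ≤ L) {n : ℕ} (hn : M + L ≤ n) (k : ℕ) :
    ‖hypCoeff ![a + n, b, c] ![1, e + n, f + n] k‖ ≤
      ‖hypCoeff ![(M + 2 * L : ℝ), ‖b‖, ‖c‖] ![1, M, M] k‖ := by
  refine norm_hypCoeff_le (fun j => ?_) k
  have hL : 0 ≤ L := (norm_nonneg a).trans ha
  have upper (x : ℂ) : ‖x + j‖ ≤ ‖x‖ + j := by simpa using norm_add_le x j
  have lower {x : ℂ} (hx : ‖x‖ ≤ L) : n + j - L ≤ ‖x + n + j‖ := by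
    have h := norm_sub_norm_le (n + j : ℂ) (-x)
    rw [norm_neg, sub_neg_eq_add, ← Nat.cast_add, norm_natCast, Nat.cast_add] at h
    calc (n + j - L : ℝ) ≤ n + j - ‖x‖ := by gcongr
      _ ≤ ‖x + n + j‖ := by convert! h using 2; push_cast; ring
  have hquot : ‖a + n + j‖ / ‖e + n + j‖ ≤ (M + 2 * L + j) / (M + j) := by
    have ha' : ‖a + n + j‖ ≤ L + n + j :=
      (upper _).trans (by gcongr; simpa using (norm_add_le a n).trans (by gcongr; simp))
    rw [div_le_div_iff₀ (by linarith [lower he]) (by positivity)]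
    calc ‖a + n + j‖ * (M + j) ≤ (L + n + j) * (M + j) := by gcongr
      _ ≤ (M + 2 * L + j) * (n + j - L) := by nlinarith
      _ ≤ (M + 2 * L + j) * ‖e + n + j‖ := by gcongr; exact lower he
  have hf' : M + j ≤ ‖f + n + j‖ := by linarith [lower hf]
  have hcast {x : ℝ} (hx : 0 ≤ x) : ‖(x + j : ℂ)‖ = x + j := by
    rw [← ofReal_natCast, ← ofReal_add, norm_real, Real.norm_of_nonneg (by positivity)]
  have hML : 0 ≤ M + 2 * L := by positivity
  simp only [Fin.prod_univ_three, Matrix.cons_val, norm_mul, norm_div, hcast hML, hcast hM.le,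
    hcast (norm_nonneg b), hcast (norm_nonneg c)]
  calc _ = ‖a + n + j‖ / ‖e + n + j‖ * ‖b + j‖ * ‖c + j‖ / ‖(1 + j : ℂ)‖ / ‖f + n + j‖ := by ring
    _ ≤ (M + 2 * L + j) / (M + j) * (‖b‖ + j) * (‖c‖ + j) / ‖(1 + j : ℂ)‖ / (M + j) := by
      gcongr
      exacts [upper b, upper c]
    _ = _ := by ring

lemma tendsto_hypCoeff_add_natCast (a b c e f : ℂ) (k : ℕ) :
    Tendsto (fun n : ℕ => hypCoeff ![a + n, b, c] ![1, e + n, f + n] k) atTop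
      (𝓝 (if k = 0 then 1 else 0)) := by
  induction k with
  | zero => simp [hypCoeff_zero]
  | succ k ih =>
    have hquot (u v w : ℂ) : Tendsto (fun n : ℕ => (u + v * n) / (w + n)) atTop (𝓝 v) := by
      simpa using tendsto_add_mul_div_add_mul_atTop_nhds u w v one_ne_zero
    have hratio := ((hquot (a + k) 1 (e + k)).mul (hquot 1 0 (f + k))).mul_const
      ((b + k) * (c + k) / (1 + k))
    rw [mul_zero, zero_mul] at hratio
    have h := ih.mul hratio
    rw [mul_zero] at h
    rw [if_neg k.succ_ne_zero]
    refine h.congr fun n => ?_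
    rw [hypCoeff_succ, Fin.prod_univ_three]
    simp only [Matrix.cons_val, add_right_comm _ (n : ℂ), zero_mul, add_zero, one_mul]
    ring

lemma tendsto_cHyp_one_add_natCast (a b c e f : ℂ) :
    Tendsto (fun n : ℕ => cHyp ![a + n, b, c] ![1, e + n, f + n] 1) atTop (𝓝 1) := by
  let L : ℝ := ‖a‖ + ‖e‖ + ‖f‖
  let M : ℝ := ‖b‖ + ‖c‖ + 2 * L + 1
  have hM : 0 < M := by positivity
  have hMC : ¬ IsNonposInt (M : ℂ) := not_isNonposInt_of_re_pos (by simpa using hM)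
  have hbound : Summable (hypCoeff ![(M + 2 * L : ℝ), ‖b‖, ‖c‖] ![1, M, M]) := by
    refine summable_hypCoeff_fin_three hMC hMC ?_
    simp only [sub_re, add_re, ofReal_re]
    linarith
  have hlim := tendsto_tsum_of_dominated_convergence hbound.norm
    (tendsto_hypCoeff_add_natCast a b c e f) (by
      filter_upwards [eventually_ge_atTop ⌈M + L⌉₊] with n hn k
      have hsum (x y z : ℂ) : ‖x‖ ≤ ‖x‖ + ‖y‖ + ‖z‖ := by
        linarith [norm_nonneg y, norm_nonneg z]
      exact norm_hypCoeff_add_natCast_le a b c e f hM (hsum a e f)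
        (by linarith [norm_nonneg a, norm_nonneg f]) (by linarith [norm_nonneg a, norm_nonneg e])
        (Nat.ceil_le.1 hn) k)
  simpa [cHyp_one] using hlim

lemma eq_prod_Gamma_div_Gamma {ι : Type} [Fintype ι] {x y : ι → ℂ} {F : ℕ → ℂ}
    (hy : ∀ i, ¬ IsNonposInt (y i)) (hxy : ∑ i, x i = ∑ i, y i) (hF : Tendsto F atTop (𝓝 1))
    (hrec : ∀ n : ℕ, F n = (∏ i, (x i + n) / (y i + n)) * F (n + 1)) :
    F 0 = ∏ i, Gamma (y i) / Gamma (x i) := by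
  have hiter (n : ℕ) : F 0 = hypCoeff x y n * F n := by
    induction n with
    | zero => rw [hypCoeff_zero, one_mul]
    | succ n ih => rw [ih, hrec n, hypCoeff_succ, mul_assoc]
  have hlim := (tendsto_hypCoeff hy hxy).mul hF
  rw [mul_one] at hlim
  exact tendsto_nhds_unique (tendsto_const_nhds.congr hiter) hlim

lemma cHyp_one_eq_prod_Gamma_div_Gamma {ι : Type} [Fintype ι] {x y : ι → ℂ} {a b c e f : ℂ}
    (hy : ∀ i, ¬ IsNonposInt (y i)) (hxy : ∑ i, x i = ∑ i, y i)
    (hrec : ∀ n : ℕ, cHyp ![a + 2 * n, b, c] ![1, e + 2 * n, f + 2 * n] 1 =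
      (∏ i, (x i + n) / (y i + n)) *
        cHyp ![a + 2 * n + 2, b, c] ![1, e + 2 * n + 2, f + 2 * n + 2] 1) :
    cHyp ![a, b, c] ![1, e, f] 1 = ∏ i, Gamma (y i) / Gamma (x i) := by
  have hlim : Tendsto (fun n : ℕ => cHyp ![a + 2 * n, b, c] ![1, e + 2 * n, f + 2 * n] 1) atTop
      (𝓝 1) := by
    simpa [Function.comp_def] using (tendsto_cHyp_one_add_natCast a b c e f).comp
      (tendsto_id.const_mul_atTop' two_pos)
  simpa using eq_prod_Gamma_div_Gamma hy hxy hlim fun n => by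
    simpa [mul_add, add_assoc] using hrec n

end ShiftedSums

section Dixon

variable {a b c : ℂ}

lemma cHyp_one_dixon_add_two (ha : ¬ IsNonposInt a) (he : ¬ IsNonposInt (1 + a - b))
    (hf : ¬ IsNonposInt (1 + a - c)) (hs : 0 < (2 + a - 2 * b - 2 * c).re) :
    cHyp ![a, b, c] ![1, 1 + a - b, 1 + a - c] 1 =
      ((1 + a) / 2) * ((1 + a - b - c) / 2) * ((1 + a - b - c + 1) / 2) * (1 + a / 2 - b) *
          (1 + a / 2 - c) /
        ((1 + a / 2 - b - c) * ((1 + a - b) / 2) * ((1 + a - b + 1) / 2) * ((1 + a - c) / 2) *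
          ((1 + a - c + 1) / 2)) *
        cHyp ![a + 2, b, c] ![1, 1 + a - b + 2, 1 + a - c + 2] 1 := by
  have ha₀ : a ≠ 0 := by simpa using add_natCast_ne_zero ha 0
  have ha₁ : a + 1 ≠ 0 := by simpa using add_natCast_ne_zero ha 1
  have hs₀ : 1 + a / 2 - b - c ≠ 0 := fun h => by
    simp [show 2 + a - 2 * b - 2 * c = 0 by linear_combination 2 * h] at hs
  refine cHyp_one_eq_mul_cHyp_add_two
    (M := (1 + a - b - c) * (2 + a - b - c) * (2 + a - 2 * b) * (2 + a - 2 * c))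
    (P := fun k => (2 + a - 2 * b - 2 * c) * (1 - b) * (1 - c) +
      a ^ 2 * (2 * (b + c) - 3 - 2 * a) + a * (2 * (b + c) - 3 - 3 * a) * k + -a * k ^ 2)
    (mul_ne_zero (mul_ne_zero two_ne_zero ha₀) hs₀) ha₀ ha₁ he hf ?_ ?_
    (tendsto_quadratic_div _ _ _ _ _) fun k => ?_
  · convert! hs using 2
    ring
  · have he₀ : 1 + a - b ≠ 0 := by simpa using add_natCast_ne_zero he 0
    have he₁ : 1 + a - b + 1 ≠ 0 := by simpa using add_natCast_ne_zero he 1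
    have hf₀ : 1 + a - c ≠ 0 := by simpa using add_natCast_ne_zero hf 0
    have hf₁ : 1 + a - c + 1 ≠ 0 := by simpa using add_natCast_ne_zero hf 1
    have hden : (1 + a / 2 - b - c) * ((1 + a - b) / 2) * ((1 + a - b + 1) / 2) *
        ((1 + a - c) / 2) * ((1 + a - c + 1) / 2) ≠ 0 := by simp [hs₀, he₀, he₁, hf₀, hf₁]
    rw [mul_div_assoc', div_mul_eq_mul_div, eq_div_iff hden]
    ring
  · push_cast
    ring

lemma cHyp_one_dixon_eq_prod (ha : ¬ IsNonposInt a) (he : ¬ IsNonposInt (1 + a - b))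
    (hf : ¬ IsNonposInt (1 + a - c)) (hs : 0 < (2 + a - 2 * b - 2 * c).re) :
    cHyp ![a, b, c] ![1, 1 + a - b, 1 + a - c] 1 =
      ∏ i, Gamma (![1 + a / 2 - b - c, (1 + a - b) / 2, (1 + a - b + 1) / 2, (1 + a - c) / 2,
          (1 + a - c + 1) / 2] i) /
        Gamma (![(1 + a) / 2, (1 + a - b - c) / 2, (1 + a - b - c + 1) / 2, 1 + a / 2 - b,
          1 + a / 2 - c] i) := by
  refine cHyp_one_eq_prod_Gamma_div_Gamma ?_ ?_ fun n => ?_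
  · have hs₀ : ¬ IsNonposInt (1 + a / 2 - b - c) := not_isNonposInt_of_re_pos (by
      rw [show 1 + a / 2 - b - c = (1 / 2 : ℝ) * (2 + a - 2 * b - 2 * c) by push_cast; ring,
        re_ofReal_mul]
      positivity)
    simpa [Fin.forall_fin_succ] using ⟨hs₀, not_isNonposInt_half he,
      not_isNonposInt_add_one_half he, not_isNonposInt_half hf, not_isNonposInt_add_one_half hf⟩
  · simp only [Fin.sum_univ_five, Matrix.cons_val]
    ring
  · have ha' := not_isNonposInt_add_natCast ha (2 * n)
    have he' := not_isNonposInt_add_natCast he (2 * n)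
    have hf' := not_isNonposInt_add_natCast hf (2 * n)
    have hs' : 0 < (2 + a - 2 * b - 2 * c + (2 * n : ℕ)).re := by
      rw [add_re, natCast_re]
      positivity
    push_cast at ha' he' hf' hs'
    have h := cHyp_one_dixon_add_two (b := b) (c := c) ha' (by convert! he' using 2; ring)
      (by convert! hf' using 2; ring) (by convert! hs' using 2; ring)
    rw [show 1 + a - b + 2 * n = 1 + (a + 2 * n) - b by ring,
      show 1 + a - c + 2 * n = 1 + (a + 2 * n) - c by ring, h]
    rw [prod_div_distrib]
    simp only [Fin.prod_univ_five, Matrix.cons_val]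
    congr 2 <;> ring

theorem cHyp_one_dixon (ha : ¬ IsNonposInt a) (he : ¬ IsNonposInt (1 + a - b))
    (hf : ¬ IsNonposInt (1 + a - c)) (hs : 0 < (2 + a - 2 * b - 2 * c).re) :
    cHyp ![a, b, c] ![1, 1 + a - b, 1 + a - c] 1 =
      Gamma (1 + a / 2) * Gamma (1 + a / 2 - b - c) * Gamma (1 + a - b) * Gamma (1 + a - c) /
        (Gamma (1 + a) * Gamma (1 + a - b - c) * Gamma (1 + a / 2 - b) *
          Gamma (1 + a / 2 - c)) := by
  have hpow : (2 : ℂ) ^ (1 - (1 + a - b)) * 2 ^ (1 - (1 + a - c)) =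
      2 ^ (1 - (1 + a)) * 2 ^ (1 - (1 + a - b - c)) := by
    rw [← cpow_add _ _ two_ne_zero, ← cpow_add _ _ two_ne_zero]
    ring_nf
  have hpow₀ (x : ℂ) : (2 : ℂ) ^ x ≠ 0 := by simp
  have hπ : (√Real.pi : ℂ) ≠ 0 := by exact_mod_cast (Real.sqrt_pos.2 Real.pi_pos).ne'
  have ha₂ : ¬ IsNonposInt ((1 + a + 1) / 2) := by
    convert! not_isNonposInt_add_natCast (not_isNonposInt_half ha) 1 using 2
    push_cast
    ring
  have hΓ : Gamma ((1 + a + 1) / 2) ≠ 0 := mt (Gamma_eq_zero_iff _).1 ha₂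
  rw [cHyp_one_dixon_eq_prod ha he hf hs, prod_div_distrib, ← mul_div_mul_right _ _ hΓ]
  simp only [Fin.prod_univ_five, Matrix.cons_val]
  calc _ = Gamma ((1 + a + 1) / 2) * Gamma (1 + a / 2 - b - c) *
          (Gamma ((1 + a - b) / 2) * Gamma ((1 + a - b + 1) / 2)) *
          (Gamma ((1 + a - c) / 2) * Gamma ((1 + a - c + 1) / 2)) /
        (Gamma ((1 + a) / 2) * Gamma ((1 + a + 1) / 2) *
          (Gamma ((1 + a - b - c) / 2) * Gamma ((1 + a - b - c + 1) / 2)) *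
          Gamma (1 + a / 2 - b) * Gamma (1 + a / 2 - c)) := by congr 1 <;> ring
    _ = Gamma (1 + a / 2) * Gamma (1 + a / 2 - b - c) * Gamma (1 + a - b) * Gamma (1 + a - c) /
          (Gamma (1 + a) * Gamma (1 + a - b - c) * Gamma (1 + a / 2 - b) *
            Gamma (1 + a / 2 - c)) *
        ((2 ^ (1 - (1 + a - b)) * 2 ^ (1 - (1 + a - c)) * √Real.pi ^ 2) /
          (2 ^ (1 - (1 + a)) * 2 ^ (1 - (1 + a - b - c)) * √Real.pi ^ 2)) := by
        simp only [Gamma_half_mul_Gamma_add_one_half]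
        rw [div_mul_div_comm, show (1 + a + 1) / 2 = 1 + a / 2 by ring]
        congr 1 <;> ring
    _ = _ := by
        rw [hpow, div_self (by simp [hpow₀, hπ]), mul_one]

end Dixon

section Whipple

variable {b e f : ℂ}

lemma cHyp_one_whipple_add_two (he : ¬ IsNonposInt e) (hf : ¬ IsNonposInt f)
    (hs : 0 < (e + f - 1).re) :
    cHyp ![(e + f - 1) / 2, b, 1 - b] ![1, e, f] 1 =
      ((b + e) / 2) * ((b + f) / 2) * ((1 - b + e) / 2) * ((1 - b + f) / 2) /
          ((e / 2) * ((e + 1) / 2) * (f / 2) * ((f + 1) / 2)) *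
        cHyp ![(e + f - 1) / 2 + 2, b, 1 - b] ![1, e + 2, f + 2] 1 := by
  have ha : 0 < ((e + f - 1) / 2).re := by
    rw [div_ofNat_re]
    positivity
  have ha₀ : (e + f - 1) / 2 ≠ 0 := by
    simpa using add_natCast_ne_zero (not_isNonposInt_of_re_pos ha) 0
  have ha₁ : (e + f - 1) / 2 + 1 ≠ 0 := by
    simpa using add_natCast_ne_zero (not_isNonposInt_of_re_pos ha) 1
  generalize haef : (e + f - 1) / 2 = a at *
  obtain rfl : e = 2 * a + 1 - f := by linear_combination 2 * haef
  refine cHyp_one_eq_mul_cHyp_add_two (D := a * (a + 1))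
    (M := (b + (2 * a + 1 - f)) * (b + f) * (1 - b + (2 * a + 1 - f)) * (1 - b + f))
    (P := fun k => (a + 1) * (2 * a + 1 - f - a) * (f - a) + (a + 1) * a ^ 2 +
      ((2 * a + 1 - f) * f - b * (1 - b) - a - (2 * a + 1) ^ 2) * a +
      ((2 * a + 1 - f) * f - b * (1 - b) - a - (2 * a + 1) ^ 2) * k + -(a + 1) * k ^ 2)
    (mul_ne_zero ha₀ ha₁) ha₀ ha₁ he hf ?_ ?_ (tendsto_quadratic_div _ _ _ _ _) fun k => ?_
  · convert! ha using 2
    ring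
  · have he₀ : 2 * a + 1 - f ≠ 0 := by simpa using add_natCast_ne_zero he 0
    have he₁ : 2 * a + 1 - f + 1 ≠ 0 := by simpa using add_natCast_ne_zero he 1
    have hf₀ : f ≠ 0 := by simpa using add_natCast_ne_zero hf 0
    have hf₁ : f + 1 ≠ 0 := by simpa using add_natCast_ne_zero hf 1
    field_simp
  · push_cast
    ring

lemma cHyp_one_whipple_eq_prod (he : ¬ IsNonposInt e) (hf : ¬ IsNonposInt f)
    (hs : 0 < (e + f - 1).re) :
    cHyp ![(e + f - 1) / 2, b, 1 - b] ![1, e, f] 1 =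
      ∏ i, Gamma (![e / 2, (e + 1) / 2, f / 2, (f + 1) / 2] i) /
        Gamma (![(b + e) / 2, (b + f) / 2, (1 - b + e) / 2, (1 - b + f) / 2] i) := by
  refine cHyp_one_eq_prod_Gamma_div_Gamma ?_ ?_ fun n => ?_
  · simpa [Fin.forall_fin_succ] using ⟨not_isNonposInt_half he, not_isNonposInt_add_one_half he,
      not_isNonposInt_half hf, not_isNonposInt_add_one_half hf⟩
  · simp only [Fin.sum_univ_four, Matrix.cons_val]
    ring
  · have he' := not_isNonposInt_add_natCast he (2 * n)
    have hf' := not_isNonposInt_add_natCast hf (2 * n)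
    push_cast at he' hf'
    have hs' : 0 < (e + 2 * n + (f + 2 * n) - 1).re := by
      rw [show e + 2 * n + (f + 2 * n) - 1 = e + f - 1 + (4 * n : ℕ) by push_cast; ring, add_re,
        natCast_re]
      positivity
    rw [show (e + f - 1) / 2 + 2 * n = (e + 2 * n + (f + 2 * n) - 1) / 2 by ring,
      cHyp_one_whipple_add_two he' hf' hs', prod_div_distrib]
    simp only [Fin.prod_univ_four, Matrix.cons_val]
    congr 2 <;> ring

theorem cHyp_one_whipple (b : ℂ) (he : ¬ IsNonposInt e) (hf : ¬ IsNonposInt f)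
    (hs : 0 < (e + f - 1).re) :
    cHyp ![(e + f - 1) / 2, b, 1 - b] ![1, e, f] 1 =
      Real.pi * 2 ^ (2 - e - f) * Gamma e * Gamma f /
        (Gamma ((b + e) / 2) * Gamma ((b + f) / 2) * Gamma ((1 - b + e) / 2) *
          Gamma ((1 - b + f) / 2)) := by
  have hπ : (√Real.pi : ℂ) * √Real.pi = Real.pi := by
    exact_mod_cast Real.mul_self_sqrt Real.pi_pos.le
  rw [cHyp_one_whipple_eq_prod he hf hs, prod_div_distrib]
  simp only [Fin.prod_univ_four, Matrix.cons_val]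
  congr 1
  calc _ = Gamma (e / 2) * Gamma ((e + 1) / 2) * (Gamma (f / 2) * Gamma ((f + 1) / 2)) := by ring
    _ = (√Real.pi * √Real.pi) * (2 ^ (1 - e) * 2 ^ (1 - f)) * Gamma e * Gamma f := by
      simp only [Gamma_half_mul_Gamma_add_one_half]
      ring
    _ = _ := by
      rw [hπ, ← cpow_add _ _ two_ne_zero]
      ring_nf

end Whipple

section Saalschutz

variable {e f : ℂ}

/- Leaving `x` free separates the number of summands from the parameter `-x`, which allows induction
on the former; the Saalschütz theorem needs only `x = n`. -/
lemma sum_range_hypCoeff_sub (a : ℂ) (he : ¬ IsNonposInt e) (hf : ¬ IsNonposInt f) {x : ℂ}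
    (hex : e + x ≠ 0) (hfx : f + x ≠ 0) (n : ℕ) :
    ∑ k ∈ range (n + 1), (hypCoeff ![-(x + 1), a + x + 1, e + f - 1 - a] ![1, e, f] k -
        (1 + a - e + x) * (1 + a - f + x) / ((e + x) * (f + x)) *
          hypCoeff ![-x, a + x, e + f - 1 - a] ![1, e, f] k) =
      (2 * x + 1 + a) * (e + f - 1 - a + n) / ((e + x) * (f + x)) *
        hypCoeff ![-x, a + x + 1, e + f - 1 - a] ![1, e, f] n := by
  induction n with
  | zero =>
    simp only [zero_add, sum_range_one, hypCoeff_zero, Nat.cast_zero]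
    field_simp
    ring
  | succ n ih =>
    have hen := add_natCast_ne_zero he n
    have hfn := add_natCast_ne_zero hf n
    have hn : (n : ℂ) + 1 ≠ 0 := n.cast_add_one_ne_zero
    have hx : (-(x + 1))⁽n + 1⁾ = -(x + 1) * (-x)⁽n⁾ := by
      rw [ascPochhammer_eval_succ_left, neg_add_rev, add_comm (-1), neg_add_cancel_right]
    have hax : (a + x)⁽n + 1⁾ = (a + x) * (a + x + 1)⁽n⁾ := ascPochhammer_eval_succ_left _ _
    rw [sum_range_succ, ih]
    simp only [hypCoeff_fin_three, hx, hax, ascPochhammer_succ_eval, Nat.factorial_succ]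
    push_cast
    field_simp
    ring

theorem sum_range_hypCoeff_saalschutz (a : ℂ) (he : ¬ IsNonposInt e) (hf : ¬ IsNonposInt f)
    (n : ℕ) :
    ∑ k ∈ range (n + 1), hypCoeff ![-n, a + n, e + f - 1 - a] ![1, e, f] k =
      (1 + a - e)⁽n⁾ * (1 + a - f)⁽n⁾ / (e⁽n⁾ * f⁽n⁾) := by
  induction n with
  | zero => simp [hypCoeff_zero]
  | succ n ih =>
    have hvanish (A : ℂ) :
        hypCoeff ![-(n : ℂ), A, e + f - 1 - a] ![1, e, f] (n + 1) = 0 := by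
      simp [hypCoeff_fin_three, ascPochhammer_eval_neg_coe_nat_of_lt]
    have h := sum_range_hypCoeff_sub a he hf (add_natCast_ne_zero he n)
      (add_natCast_ne_zero hf n) (n + 1)
    rw [hvanish, mul_zero, sum_sub_distrib, ← mul_sum,
      sum_range_succ (hypCoeff ![-(n : ℂ), _, _] _), hvanish, add_zero, ih, sub_eq_zero] at h
    push_cast
    rw [← add_assoc, h]
    simp only [ascPochhammer_succ_eval]
    rw [div_mul_div_comm]
    congr 1 <;> ring

end Saalschutz

lemma tsum_sum_antidiagonal {f : ℕ × ℕ → ℂ} (hf : Summable f) :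
    ∑' n, ∑ p ∈ antidiagonal n, f p = ∑' k, ∑' m, f (k, m) := by
  rw [← hf.tsum_prod, ← HasAntidiagonal.sigmaAntidiagonalEquivProd.tsum_eq]
  refine .trans (tsum_congr fun n => ?_) (Summable.tsum_sigma'
    (fun n => (hasSum_fintype _).summable)
    (HasAntidiagonal.sigmaAntidiagonalEquivProd.summable_iff.2 hf)).symm
  rw [tsum_fintype, ← sum_coe_sort]
  rfl

section WhippleQuadratic

variable {e f : ℂ}

lemma hypCoeff_well_poised_eq_sum_antidiagonal (a : ℂ) (he : ¬ IsNonposInt e)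
    (hf : ¬ IsNonposInt f) (n : ℕ) :
    hypCoeff ![a, 1 + a - e, 1 + a - f] ![1, e, f] n =
      ∑ p ∈ antidiagonal n, hypCoeff ![a / 2, (a + 1) / 2, e + f - 1 - a] ![1, e, f] p.1 *
        (-4) ^ p.1 * ((a + 2 * p.1)⁽p.2⁾ / p.2 !) := by
  have hterm (p : ℕ × ℕ) (hp : p ∈ antidiagonal n) :
      hypCoeff ![a / 2, (a + 1) / 2, e + f - 1 - a] ![1, e, f] p.1 *
        (-4) ^ p.1 * ((a + 2 * p.1)⁽p.2⁾ / p.2 !) =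
      a⁽n⁾ / n ! * hypCoeff ![-n, a + n, e + f - 1 - a] ![1, e, f] p.1 := by
    obtain ⟨k, m⟩ := p
    obtain rfl : k + m = n := mem_antidiagonal.1 hp
    have hm : ((m ! : ℕ) : ℂ) ≠ 0 := by exact_mod_cast m.factorial_ne_zero
    have hkm : (((k + m)! : ℕ) : ℂ) ≠ 0 := by exact_mod_cast (k + m).factorial_ne_zero
    have hsplit : 4 ^ k * (a / 2)⁽k⁾ * ((a + 1) / 2)⁽k⁾ * (a + 2 * k)⁽m⁾ =
        a⁽k + m⁾ * (a + (k + m : ℕ))⁽k⁾ := by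
      rw [← ascPochhammer_eval_two_mul_s13, ← ascPochhammer_eval_add,
        show k + m + k = 2 * k + m by ring, ascPochhammer_eval_add]
      push_cast
      rfl
    rw [hypCoeff_fin_three, hypCoeff_fin_three,
      eq_div_of_mul_eq hm (ascPochhammer_eval_neg_natCast k m), neg_pow]
    field_simp
    linear_combination (e + f - 1 - a)⁽k⁾ / (k ! * e⁽k⁾ * f⁽k⁾) * hsplit
  rw [sum_congr rfl hterm, ← mul_sum,
    Finset.Nat.sum_antidiagonal_eq_sum_range_succ_mk, sum_range_hypCoeff_saalschutz a he hf,
    hypCoeff_fin_three, div_mul_div_comm]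
  ring

lemma summable_hypCoeff_mul_ascPochhammer_eval {ι : Type} [Fintype ι] (u v : ι → ℂ) (a : ℂ)
    {z : ℂ} (hz : ‖z‖ < 1 / 16) :
    Summable fun p : ℕ × ℕ =>
      hypCoeff u v p.1 * (-4 * z) ^ p.1 * ((a + 2 * p.1)⁽p.2⁾ / p.2 ! * z ^ p.2) := by
  obtain ⟨N, hN⟩ := exists_nat_ge ‖a‖
  have hu := summable_norm_hypCoeff_mul_pow u v (r := 16 * ‖z‖) (by positivity) (by linarith)
  have hv := (summable_geometric_of_lt_one (r := 2 * ‖z‖) (by positivity) (by linarith)).mul_left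
    (2 ^ N)
  refine .of_norm_bounded (hu.mul_of_nonneg hv (fun _ => by positivity) fun _ => by positivity) ?_
  rintro ⟨k, m⟩
  have hx : ‖a + 2 * k‖ ≤ (N + 2 * k : ℕ) + 1 := by
    have h := norm_add_le a (2 * k)
    rw [norm_mul, norm_natCast, RCLike.norm_ofNat] at h
    push_cast
    linarith
  have hm : ‖(a + 2 * k)⁽m⁾ / (m !)‖ ≤ 2 ^ (N + 2 * k + m) := by
    rw [norm_div, norm_natCast, div_le_iff₀ (by positivity)]
    exact norm_ascPochhammer_eval_le_s13 hx m
  calc _ = ‖hypCoeff u v k‖ * (4 * ‖z‖) ^ k * (‖(a + 2 * k)⁽m⁾ / (m !)‖ * ‖z‖ ^ m) := by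
        simp [norm_pow]
    _ ≤ ‖hypCoeff u v k‖ * (4 * ‖z‖) ^ k * (2 ^ (N + 2 * k + m) * ‖z‖ ^ m) := by gcongr
    _ = _ := by
        rw [pow_add, pow_add, pow_mul, show (16 : ℝ) = 2 ^ 2 * 4 by norm_num]
        simp only [mul_pow]
        ring

lemma cHyp_whipple_quadratic_of_norm_lt (a : ℂ) (he : ¬ IsNonposInt e) (hf : ¬ IsNonposInt f)
    {z : ℂ} (hz : ‖z‖ < 1 / 16) :
    cHyp ![a, 1 + a - e, 1 + a - f] ![1, e, f] z = (1 - z) ^ (-a) *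
      cHyp ![a / 2, (a + 1) / 2, e + f - 1 - a] ![1, e, f] (-4 * z / (1 - z) ^ 2) := by
  have hz₁ : ‖z‖ < 1 := by linarith
  have hz₀ : 1 - z ≠ 0 := sub_ne_zero.2 fun h => by simp [← h] at hz₁
  have hsum := summable_hypCoeff_mul_ascPochhammer_eval
    ![a / 2, (a + 1) / 2, e + f - 1 - a] ![1, e, f] a hz
  have hinner (k : ℕ) := hasSum_ascPochhammer_eval_div_factorial (a + 2 * k) hz₁
  have hpow (k : ℕ) : (1 - z) ^ (-(a + 2 * k)) = (1 - z) ^ (-a) / ((1 - z) ^ 2) ^ k := by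
    rw [neg_add', cpow_sub _ _ hz₀, ← pow_mul, ← cpow_natCast]
    push_cast
    rfl
  calc _ = ∑' n, ∑ p ∈ antidiagonal n,
        hypCoeff ![a / 2, (a + 1) / 2, e + f - 1 - a] ![1, e, f] p.1 * (-4 * z) ^ p.1 *
          ((a + 2 * p.1)⁽p.2⁾ / p.2 ! * z ^ p.2) := by
        refine tsum_congr fun n => ?_
        rw [hypCoeff_well_poised_eq_sum_antidiagonal a he hf, sum_mul]
        refine sum_congr rfl fun p hp => ?_
        rw [← mem_antidiagonal.1 hp, mul_pow, pow_add]
        ring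
    _ = ∑' k, ∑' m, hypCoeff ![a / 2, (a + 1) / 2, e + f - 1 - a] ![1, e, f] k *
          (-4 * z) ^ k * ((a + 2 * k)⁽m⁾ / m ! * z ^ m) :=
        tsum_sum_antidiagonal hsum
    _ = _ := by
        simp_rw [tsum_mul_left, (hinner _).tsum_eq, hpow, cHyp, ← tsum_mul_left]
        refine tsum_congr fun k => ?_
        rw [div_pow]
        ring

lemma starConvex_setOf_four_mul_norm_lt :
    StarConvex ℝ 0 {z : ℂ | ‖z‖ < 1 ∧ 4 * ‖z‖ < ‖1 - z‖ ^ 2} := by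
  rw [starConvex_zero_iff]
  rintro z ⟨hz₁, hz⟩ t ht₀ ht₁
  have hnorm (s : ℝ) : ‖1 - s • z‖ ^ 2 = 1 - 2 * s * z.re + s ^ 2 * ‖z‖ ^ 2 := by
    simp only [← normSq_eq_norm_sq, normSq_apply, sub_re, sub_im, one_re, one_im, real_smul,
      re_ofReal_mul, im_ofReal_mul]
    ring
  have h₁ := hnorm 1
  rw [one_smul] at h₁
  have htz : t * ‖z‖ ^ 2 ≤ 1 :=
    mul_le_one₀ ht₁ (by positivity) (pow_le_one₀ (norm_nonneg z) hz₁.le)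
  have hkey : t * ‖1 - z‖ ^ 2 + (1 - t) * (1 - t * ‖z‖ ^ 2) = ‖1 - t • z‖ ^ 2 := by
    rw [h₁, hnorm]
    ring
  rw [Set.mem_ofPred_eq, norm_smul, Real.norm_of_nonneg ht₀, ← hkey]
  refine ⟨mul_lt_one_of_nonneg_of_lt_one_right ht₁ (norm_nonneg z) hz₁, ?_⟩
  rcases ht₀.eq_or_lt with rfl | ht
  · norm_num
  · nlinarith [mul_nonneg (sub_nonneg.2 ht₁) (sub_nonneg.2 htz), mul_lt_mul_of_pos_left hz ht]

theorem cHyp_whipple_quadratic (a : ℂ) (he : ¬ IsNonposInt e) (hf : ¬ IsNonposInt f) {z : ℂ}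
    (hz₁ : ‖z‖ < 1) (hz : 4 * ‖z‖ < ‖1 - z‖ ^ 2) :
    cHyp ![a, 1 + a - e, 1 + a - f] ![1, e, f] z = (1 - z) ^ (-a) *
      cHyp ![a / 2, (a + 1) / 2, e + f - 1 - a] ![1, e, f] (-4 * z / (1 - z) ^ 2) := by
  have hslit {w : ℂ} (hw : ‖w‖ < 1) : 1 - w ∈ slitPlane := by
    simpa only [sub_eq_add_neg] using mem_slitPlane_of_norm_lt_one (z := -w) (by rwa [norm_neg])
  refine AnalyticOnNhd.eqOn_of_preconnected_of_eventuallyEq (𝕜 := ℂ)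
    (U := {z : ℂ | ‖z‖ < 1 ∧ 4 * ‖z‖ < ‖1 - z‖ ^ 2}) (z₀ := 0)
    (f := cHyp ![a, 1 + a - e, 1 + a - f] ![1, e, f])
    (g := fun z => (1 - z) ^ (-a) *
      cHyp ![a / 2, (a + 1) / 2, e + f - 1 - a] ![1, e, f] (-4 * z / (1 - z) ^ 2))
    (fun w hw => analyticOnNhd_cHyp _ _ w (mem_ball_zero_iff.2 hw.1)) (fun w hw => ?_)
    (starConvex_setOf_four_mul_norm_lt.isPathConnected (by simp)).isConnected.isPreconnected
    (by simp) ?_ ⟨hz₁, hz⟩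
  · have hw₀ : 1 - w ≠ 0 := slitPlane_ne_zero (hslit hw.1)
    have hball : -4 * w / (1 - w) ^ 2 ∈ Metric.ball (0 : ℂ) 1 := by
      rw [mem_ball_zero_iff, norm_div, norm_mul, norm_pow, norm_neg, RCLike.norm_ofNat,
        div_lt_one (by positivity)]
      exact hw.2
    have hsub : AnalyticAt ℂ (fun z => 1 - z) w := by fun_prop
    have hfrac : AnalyticAt ℂ (fun z => -4 * z / (1 - z) ^ 2) w :=
      .div (by fun_prop) (by fun_prop) (pow_ne_zero 2 hw₀)
    exact (hsub.cpow analyticAt_const (hslit hw.1)).mul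
      (AnalyticAt.comp (g := cHyp _ _) (analyticOnNhd_cHyp _ _ _ hball) hfrac)
  · filter_upwards [Metric.ball_mem_nhds 0 (by norm_num : (0 : ℝ) < 1 / 16)] with w hw
    exact cHyp_whipple_quadratic_of_norm_lt a he hf (mem_ball_zero_iff.1 hw)

lemma cHyp_whipple_quadratic_neg_ofReal (a : ℂ) (he : ¬ IsNonposInt e) (hf : ¬ IsNonposInt f)
    {r : ℝ} (hr₀ : 0 ≤ r) (hr₁ : r < 1) :
    cHyp ![a, 1 + a - e, 1 + a - f] ![1, e, f] (-r) = ((1 + r : ℝ) : ℂ) ^ (-a) *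
      cHyp ![a / 2, (a + 1) / 2, e + f - 1 - a] ![1, e, f] (4 * r / (1 + r) ^ 2 : ℝ) := by
  have hnorm : ‖(-r : ℂ)‖ = r := by simp [abs_of_nonneg hr₀]
  have hnorm' : ‖(1 - -r : ℂ)‖ = 1 + r := by
    rw [sub_neg_eq_add, ← ofReal_one, ← ofReal_add, norm_real,
      Real.norm_of_nonneg (by positivity)]
  rw [cHyp_whipple_quadratic a he hf (by rwa [hnorm])]
  · push_cast
    ring_nf
  · rw [hnorm, hnorm']
    nlinarith

theorem cHyp_neg_one_whipple_quadratic (a : ℂ) (he : ¬ IsNonposInt e) (hf : ¬ IsNonposInt f)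
    (h : Summable (hypCoeff ![a, 1 + a - e, 1 + a - f] ![1, e, f]))
    (h' : Summable (hypCoeff ![a / 2, (a + 1) / 2, e + f - 1 - a] ![1, e, f])) :
    cHyp ![a, 1 + a - e, 1 + a - f] ![1, e, f] (-1) = 2 ^ (-a) *
      cHyp ![a / 2, (a + 1) / 2, e + f - 1 - a] ![1, e, f] 1 := by
  have hcont : ContinuousOn
      (fun r : ℝ => cHyp ![a, 1 + a - e, 1 + a - f] ![1, e, f] (-r)) (Set.Icc 0 1) :=
    (continuousOn_cHyp h).comp (by fun_prop) fun r hr => by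
      simpa [abs_of_nonneg hr.1] using hr.2
  have hcpow : ContinuousOn (fun r : ℝ => ((1 + r : ℝ) : ℂ) ^ (-a)) (Set.Icc 0 1) :=
    .cpow_const (by fun_prop) fun r hr =>
      ofReal_mem_slitPlane.2 (add_pos_of_pos_of_nonneg one_pos hr.1)
  have hcont' : ContinuousOn (fun r : ℝ =>
      cHyp ![a / 2, (a + 1) / 2, e + f - 1 - a] ![1, e, f] (4 * r / (1 + r) ^ 2 : ℝ))
      (Set.Icc 0 1) := by
    refine (continuousOn_cHyp h').comp (continuous_ofReal.comp_continuousOn ?_) fun r hr => ?_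
    · exact .div (by fun_prop) (by fun_prop) fun r hr => by have := hr.1; positivity
    · have := hr.1
      rw [mem_closedBall_zero_iff, norm_real, Real.norm_of_nonneg (by positivity),
        div_le_one (by positivity)]
      linarith [sq_nonneg (1 - r)]
  have hEq : Set.EqOn _ _ (Set.Icc (0 : ℝ) 1) :=
    Set.EqOn.of_subset_closure (fun r hr => cHyp_whipple_quadratic_neg_ofReal a he hf hr.1 hr.2)
      hcont (hcpow.mul hcont') Set.Ico_subset_Icc_self (closure_Ico (zero_ne_one (α := ℝ))).ge
  have h₁ := hEq (Set.right_mem_Icc.2 zero_le_one)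
  norm_num at h₁
  exact h₁

end WhippleQuadratic

section EvenPart

lemma hypCoeff_two_mul {ι : Type} [Fintype ι] (a b : ι → ℂ) (k : ℕ) :
    hypCoeff a b (2 * k) = hypCoeff (fun i => a i / 2) (fun i => b i / 2) k *
      hypCoeff (fun i => (a i + 1) / 2) (fun i => (b i + 1) / 2) k := by
  simp only [hypCoeff, ascPochhammer_eval_two_mul_s13, prod_mul_distrib, prod_const]
  rw [mul_assoc, mul_assoc, mul_div_mul_left _ _ (by simp), mul_div_mul_comm]

lemma two_mul_tsum_hypCoeff_two_mul {ι : Type} [Fintype ι] {a b : ι → ℂ}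
    (h : Summable (hypCoeff a b)) :
    2 * ∑' k, hypCoeff a b (2 * k) = cHyp a b 1 + cHyp a b (-1) := by
  have hneg : Summable fun k => hypCoeff a b k * (-1) ^ k :=
    .of_norm (by simpa using h.norm)
  have hinj : Function.Injective fun k : ℕ => 2 * k := mul_right_injective₀ two_ne_zero
  have hsum := h.add hneg
  calc 2 * ∑' k, hypCoeff a b (2 * k)
      = ∑' k, (hypCoeff a b (2 * k) + hypCoeff a b (2 * k) * (-1) ^ (2 * k)) +
          ∑' k, (hypCoeff a b (2 * k + 1) + hypCoeff a b (2 * k + 1) * (-1) ^ (2 * k + 1)) := by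
        simp [pow_succ, pow_mul, ← two_mul, tsum_mul_left]
    _ = ∑' k, (hypCoeff a b k + hypCoeff a b k * (-1) ^ k) :=
        tsum_even_add_odd (f := fun k => hypCoeff a b k + hypCoeff a b k * (-1) ^ k)
          (hsum.comp_injective hinj) (hsum.comp_injective ((add_left_injective 1).comp hinj))
    _ = cHyp a b 1 + cHyp a b (-1) := by rw [h.tsum_add hneg, cHyp_one, cHyp]

end EvenPart

section SpecialValues

variable {a : ℂ}

lemma cHyp_one_half_add_half_sub (he : ¬ IsNonposInt (1 - 2 * a))
    (hf : ¬ IsNonposInt (1 + 2 * a)) :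
    cHyp ![1 / 2, 1 / 2 + 2 * a, 1 / 2 - 2 * a] ![1, 1 - 2 * a, 1 + 2 * a] 1 =
      Gamma (1 + 2 * a) * Gamma (1 - 2 * a) / (2 * Real.pi) *
        (Gamma (1 / 4) ^ 2 / (Gamma (3 / 4 - 2 * a) * Gamma (3 / 4 + 2 * a))) := by
  have he' : 1 + 1 / 2 - (1 / 2 + 2 * a) = 1 - 2 * a := by ring
  have hf' : 1 + 1 / 2 - (1 / 2 - 2 * a) = 1 + 2 * a := by ring
  have hdixon := cHyp_one_dixon (a := 1 / 2) (b := 1 / 2 + 2 * a) (c := 1 / 2 - 2 * a)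
    (not_isNonposInt_of_re_pos (by norm_num)) (he'.symm ▸ he) (hf'.symm ▸ hf)
    (by ring_nf; norm_num)
  have h₅ : Gamma (5 / 4) = 1 / 4 * Gamma (1 / 4) := by
    rw [← Gamma_add_one _ (by norm_num)]
    norm_num
  have h₃ : Gamma (3 / 2) = 1 / 2 * Gamma (1 / 2) := by
    rw [← Gamma_add_one _ (by norm_num)]
    norm_num
  have hπ : Gamma (1 / 2) * Gamma (1 / 2) = Real.pi := by
    have h := Gamma_mul_Gamma_one_sub (1 / 2)
    rwa [show (1 : ℂ) - 1 / 2 = 1 / 2 by norm_num, mul_one_div, sin_pi_div_two, div_one] at h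
  rw [he', hf', show (1 + 1 / 2 / 2 : ℂ) = 5 / 4 by norm_num,
    show (1 + 1 / 2 : ℂ) = 3 / 2 by norm_num,
    show 5 / 4 - (1 / 2 + 2 * a) - (1 / 2 - 2 * a) = 1 / 4 by ring,
    show 1 - 2 * a - (1 / 2 - 2 * a) = 1 / 2 by ring,
    show 5 / 4 - (1 / 2 + 2 * a) = 3 / 4 - 2 * a by ring,
    show 5 / 4 - (1 / 2 - 2 * a) = 3 / 4 + 2 * a by ring, h₅, h₃] at hdixon
  rw [hdixon, ← hπ]
  ring

lemma cHyp_one_quarter_three_quarters (he : ¬ IsNonposInt (1 - 2 * a))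
    (hf : ¬ IsNonposInt (1 + 2 * a)) :
    cHyp ![1 / 4, 3 / 4, 1 / 2] ![1, 1 - 2 * a, 1 + 2 * a] 1 =
      Real.pi * Gamma (1 + 2 * a) * Gamma (1 - 2 * a) /
        (Gamma (a + 5 / 8) * Gamma (a + 7 / 8) * Gamma (-a + 5 / 8) * Gamma (-a + 7 / 8)) := by
  have hperm : cHyp ![1 / 4, 3 / 4, 1 / 2] ![1, 1 - 2 * a, 1 + 2 * a] 1 =
      cHyp ![(1 - 2 * a + (1 + 2 * a) - 1) / 2, 1 / 4, 1 - 1 / 4] ![1, 1 - 2 * a, 1 + 2 * a] 1 := by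
    refine tsum_congr fun k => ?_
    simp only [hypCoeff_fin_three]
    ring_nf
  rw [hperm, cHyp_one_whipple (1 / 4) he hf (by ring_nf; norm_num),
    show 2 - (1 - 2 * a) - (1 + 2 * a) = 0 by ring, cpow_zero,
    show (1 / 4 + (1 - 2 * a)) / 2 = -a + 5 / 8 by ring,
    show (1 / 4 + (1 + 2 * a)) / 2 = a + 5 / 8 by ring,
    show (1 - 1 / 4 + (1 - 2 * a)) / 2 = -a + 7 / 8 by ring,
    show (1 - 1 / 4 + (1 + 2 * a)) / 2 = a + 7 / 8 by ring]
  ring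

lemma two_cpow_neg_one_half : (2 : ℂ) ^ (-(1 / 2) : ℂ) = √2 / 2 := by
  have h : (2 : ℝ) ^ (-(1 / 2) : ℝ) = √2 / 2 := by
    rw [Real.rpow_neg zero_le_two, ← Real.sqrt_eq_rpow, Real.sqrt_div_self]
  simpa [ofReal_cpow] using congrArg ofReal h

lemma cHyp_neg_one_half_add_half_sub (he : ¬ IsNonposInt (1 - 2 * a))
    (hf : ¬ IsNonposInt (1 + 2 * a)) :
    cHyp ![1 / 2, 1 / 2 + 2 * a, 1 / 2 - 2 * a] ![1, 1 - 2 * a, 1 + 2 * a] (-1) =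
      Gamma (1 + 2 * a) * Gamma (1 - 2 * a) / (2 * Real.pi) *
        (√2 * Real.pi ^ 2 /
          (Gamma (a + 5 / 8) * Gamma (a + 7 / 8) * Gamma (-a + 5 / 8) * Gamma (-a + 7 / 8))) := by
  have hquad := cHyp_neg_one_whipple_quadratic (1 / 2) he hf
    (summable_hypCoeff_fin_three he hf (by ring_nf; norm_num))
    (summable_hypCoeff_fin_three he hf (by ring_nf; norm_num))
  rw [show 1 + 1 / 2 - (1 - 2 * a) = 1 / 2 + 2 * a by ring,
    show 1 + 1 / 2 - (1 + 2 * a) = 1 / 2 - 2 * a by ring,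
    show (1 / 2 / 2 : ℂ) = 1 / 4 by norm_num, show ((1 / 2 + 1) / 2 : ℂ) = 3 / 4 by norm_num,
    show 1 - 2 * a + (1 + 2 * a) - 1 - 1 / 2 = 1 / 2 by ring,
    cHyp_one_quarter_three_quarters he hf, two_cpow_neg_one_half] at hquad
  have hπ : (Real.pi : ℂ) ≠ 0 := ofReal_ne_zero.2 Real.pi_ne_zero
  rw [hquad]
  field_simp

lemma hypCoeff_fin_six (a : ℂ) (k : ℕ) :
    hypCoeff ![1 / 4, 3 / 4, 1 / 4 + a, 3 / 4 + a, 1 / 4 - a, 3 / 4 - a]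
        ![1, 1 / 2, 1 - a, 1 / 2 - a, 1 + a, 1 / 2 + a] k =
      hypCoeff ![1 / 2, 1 / 2 + 2 * a, 1 / 2 - 2 * a] ![1, 1 - 2 * a, 1 + 2 * a] (2 * k) := by
  rw [hypCoeff_two_mul]
  simp only [hypCoeff, Fin.prod_univ_six, Fin.prod_univ_three, Matrix.cons_val]
  ring_nf

end SpecialValues

end

theorem stmt13 (a : ℂ) (ha : ¬ ∃ k : ℤ, k ≠ 0 ∧ 2 * a = (k : ℂ))
    (h1 : ¬ IsNonposInt (3 / 4 - 2 * a)) (h2 : ¬ IsNonposInt (3 / 4 + 2 * a))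
    (h3 : ¬ IsNonposInt (a + 5 / 8)) (h4 : ¬ IsNonposInt (a + 7 / 8))
    (h5 : ¬ IsNonposInt (-a + 5 / 8)) (h6 : ¬ IsNonposInt (-a + 7 / 8)) :
    Summable (fun k : ℕ =>
      hypCoeff ![1 / 4, 3 / 4, 1 / 4 + a, 3 / 4 + a, 1 / 4 - a, 3 / 4 - a]
        ![1, 1 / 2, 1 - a, 1 / 2 - a, 1 + a, 1 / 2 + a] k * (1 : ℂ) ^ k) ∧
    cHyp ![1 / 4, 3 / 4, 1 / 4 + a, 3 / 4 + a, 1 / 4 - a, 3 / 4 - a]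
        ![1, 1 / 2, 1 - a, 1 / 2 - a, 1 + a, 1 / 2 + a] 1
      = (Gamma (1 + 2 * a) * Gamma (1 - 2 * a) / (4 * (Real.pi : ℂ))) *
          (Gamma (1 / 4) ^ 2 / (Gamma (3 / 4 - 2 * a) * Gamma (3 / 4 + 2 * a))
            + (Real.sqrt 2 : ℂ) * (Real.pi : ℂ) ^ 2
              / (Gamma (a + 5 / 8) * Gamma (a + 7 / 8)
                * Gamma (-a + 5 / 8) * Gamma (-a + 7 / 8))) := by
  have he : ¬ IsNonposInt (1 - 2 * a) := fun ⟨k, hk⟩ =>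
    ha ⟨k + 1, by lia, by push_cast; linear_combination -hk⟩
  have hf : ¬ IsNonposInt (1 + 2 * a) := fun ⟨k, hk⟩ =>
    ha ⟨-(k + 1), by lia, by push_cast; linear_combination hk⟩
  have hsum : Summable
      (hypCoeff ![1 / 2, 1 / 2 + 2 * a, 1 / 2 - 2 * a] ![1, 1 - 2 * a, 1 + 2 * a]) :=
    summable_hypCoeff_fin_three he hf (by ring_nf; norm_num)
  refine ⟨?_, ?_⟩
  · simp only [one_pow, mul_one, hypCoeff_fin_six]
    exact hsum.comp_injective (mul_right_injective₀ two_ne_zero)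
  · have heven := two_mul_tsum_hypCoeff_two_mul hsum
    rw [cHyp_one_half_add_half_sub he hf, cHyp_neg_one_half_add_half_sub he hf] at heven
    simp only [cHyp_one, hypCoeff_fin_six]
    linear_combination heven / 2
end
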